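/- Let 𝓑 ⊆ ℕ be such that η* is a regular Toeplitz sequence. Then the following are equivalent: (i) h(X_η) = 0; (ii) P(X_η) = {ν_η}; (iii) X_η is uniquely ergodic. Moreover, if these hold then ν_η = ν_{η*}. -/

import Mathlib

/-!
Let `Z = ZB B` be the set of `B`-free integers that are multiples of some element of
`B ∪ Dset B`; since `MB (Bstar B) = MB (B ∪ Dset B)`, this is where `eta B` and `etaStar B` differ.
All three conditions are equivalent to `Z` having upper Banach density zero, that is, to
`USmall (ZB B) ε` for every `ε > 0`.

Regularity of `etaStar B` provides a period `Q` and a set `R` of residues modulo `Q`, omitting only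
a small proportion, on which `etaStar B` is `Q`-periodic. By Dirichlet's theorem on primes in
progressions, a class in `R` on which `etaStar B` vanishes consists of multiples of a single
`d ∈ B ∪ Dset B` with `d ∣ Q` (`exists_dvd_gcd_of_progression`).

*Sparseness of `Z` suffices* (`BAP_eta`). If `Z` has Banach density zero, `eta B` is a limit, for
the Banach density of the set of disagreements, of periodic sequences. This gives zero entropy by
counting blocks in Hamming balls around periodic blocks (`topEnt_of_BAP`), and a unique invariant
measure because window averages of continuous functions are almost independent of the window
(`unique_of_BAP`). The Mirsky measure is invariant (`IsMirsky.mem_InvM`), so it is that measure;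
and it equals the Mirsky measure of `Bstar B` since `eta B` and `etaStar B` have the same averages
(`mirsky_eq`).

*Unique ergodicity makes `Z` sparse* (`USmall_of_unique`). The Chinese remainder theorem gives
windows in which every multiple of a divisor of `Q` in `B ∪ Dset B` is a multiple of an element of
`B` (`exists_window_full`). There the density of `eta B` is, up to a small error, that of
`etaStar B`; unique ergodicity transfers this to all long windows.

*Zero entropy makes `Z` sparse* (`USmall_of_topEnt`). It suffices to treat, for the finitely many
`d ∈ Dset B` dividing `Q`, the `B`-free multiples of `d`. These correspond to the `C`-free integers
with `C = divSet B d`, and `C` contains elements `a ≥ 2` coprime to any prescribed modulus. If the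
free integers of all finite `K ⊆ C` had density at least `θ > 0`, then any set `S` of positions in
a window of length `n` could be forced to be multiples of elements of `C` while a proportion `θ` of
the other positions remains `C`-free (`exists_pattern`); this yields about `2 ^ (θ n / 2)` distinct
blocks (`pow_le_patterns`), hence positive entropy. So some finite `K ⊆ C` has sparse free
integers, and the set they form is periodic.

The pattern lemma needs that sets of multiples occupy at most their expected proportion of residue
classes coprime to the modulus, although `MB C` need not have a natural density. For this, integers
are counted with the weights `n ^ (-t)`, `t ↓ 1`. The key fact is that the proportion of a set of
multiples under these weights is monotone in `t` (`zsum_multiples_mono`), so that approximation of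
`C` by a finite subset at one value of `t` is uniform down to `t = 1` (`zsum_inter_cls_le`).
-/

open MeasureTheory Filter Topology
open scoped Classical

noncomputable section
namespace BFree


def cnt (A : Set ℤ) (L : ℕ) : ℝ := ∑ n ∈ Finset.Icc (1:ℤ) (L:ℤ), if n ∈ A then (1:ℝ) else 0

def natDensity (A : Set ℤ) (d : ℝ) : Prop := Tendsto (fun L : ℕ => cnt A L / L) atTop (𝓝 d)

def upperDensity (A : Set ℤ) : ℝ := atTop.limsup fun L : ℕ => cnt A L / L

def lowerDensity (A : Set ℤ) : ℝ := atTop.liminf fun L : ℕ => cnt A L / L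

def logDensity (A : Set ℤ) (d : ℝ) : Prop :=
  Tendsto (fun L : ℕ =>
      (∑ n ∈ Finset.Icc (1:ℤ) (L:ℤ), if n ∈ A then (n:ℝ)⁻¹ else 0) / Real.log L)
    atTop (𝓝 d)

def MB (B : Set ℕ) : Set ℤ := {n : ℤ | ∃ b ∈ B, (b:ℤ) ∣ n}

def FB (B : Set ℕ) : Set ℤ := {n : ℤ | n ∉ MB B}

def eta (B : Set ℕ) : ℤ → Bool := fun n => if n ∈ FB B then true else false

def shift (x : ℤ → Bool) : ℤ → Bool := fun n => x (n + 1)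

def shiftn (k : ℕ) (x : ℤ → Bool) : ℤ → Bool := fun n => x (n + (k:ℤ))

def orbitClosure (x : ℤ → Bool) : Set (ℤ → Bool) :=
  closure {y | ∃ m : ℤ, y = fun n => x (n + m)}

def Xeta (B : Set ℕ) : Set (ℤ → Bool) := orbitClosure (eta B)

def InvM (X : Set (ℤ → Bool)) : Set (Measure (ℤ → Bool)) :=
  {μ | IsProbabilityMeasure μ ∧ μ.map shift = μ ∧ μ X = 1}

def primPart (S : Set ℕ) : Set ℕ := {b ∈ S | ∀ b' ∈ S, b' ∣ b → b' = b}

def Dset (B : Set ℕ) : Set ℕ :=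
  {d | ∃ A : Set ℕ, A.Infinite ∧ (∀ a ∈ A, 0 < a) ∧ A.Pairwise Nat.Coprime ∧ ∀ a ∈ A, d * a ∈ B}

def Bstar (B : Set ℕ) : Set ℕ := primPart (B ∪ Dset B)

def etaStar (B : Set ℕ) : ℤ → Bool := eta (Bstar B)

def Behrend (A : Set ℕ) : Prop := (∀ a ∈ A, 0 < a) ∧ logDensity (MB A) 1

def Cset (B : Set ℕ) : Set ℕ := {c | ∃ A : Set ℕ, Behrend A ∧ ∀ a ∈ A, c * a ∈ B}

def Bprime (B : Set ℕ) : Set ℕ := primPart (B ∪ Cset B)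

def etaPrime (B : Set ℕ) : ℤ → Bool := eta (Bprime B)

def Taut (B : Set ℕ) : Prop :=
  ∀ b ∈ B, ∃ d1 d2 : ℝ, logDensity (MB (B \ {b})) d1 ∧ logDensity (MB B) d2 ∧ d1 < d2

def Per (x : ℤ → Bool) (s : ℕ) : Set ℤ := {i | ∀ k : ℤ, x (i + (s:ℤ) * k) = x i}

def IsToeplitz (x : ℤ → Bool) : Prop := ∀ i : ℤ, ∃ s : ℕ, 0 < s ∧ i ∈ Per x s

def RegularToeplitz (x : ℤ → Bool) : Prop :=
  IsToeplitz x ∧ ∃ δ : ℕ → ℝ,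
    (∀ r : ℕ, natDensity (⋃ s ∈ Finset.Icc 1 r, Per x s) (δ r)) ∧ Tendsto δ atTop (𝓝 1)

def QuasiGeneric (ℓ : ℕ → ℕ) (x : ℤ → Bool) (ν : Measure (ℤ → Bool)) : Prop :=
  ∀ f : C((ℤ → Bool), ℝ),
    Tendsto (fun i => (∑ n ∈ Finset.Icc 1 (ℓ i), f (shiftn n x)) / (ℓ i : ℝ)) atTop
      (𝓝 (∫ y, f y ∂ν))

def RealizesLowerDensity (A : Set ℤ) (ℓ : ℕ → ℕ) : Prop :=
  Tendsto ℓ atTop atTop ∧ Tendsto (fun i => cnt A (ℓ i) / (ℓ i : ℝ)) atTop (𝓝 (lowerDensity A))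

def IsMirsky (B : Set ℕ) (ν : Measure (ℤ → Bool)) : Prop :=
  IsProbabilityMeasure ν ∧ ∀ ℓ : ℕ → ℕ, RealizesLowerDensity (MB B) ℓ → QuasiGeneric ℓ (eta B) ν

def blocks (X : Set (ℤ → Bool)) (n : ℕ) : Set (Fin n → Bool) :=
  {w | ∃ x ∈ X, ∃ m : ℤ, ∀ i : Fin n, x (m + (i:ℤ)) = w i}

def pCount (X : Set (ℤ → Bool)) (n : ℕ) : ℕ := (blocks X n).ncard

def topEnt (X : Set (ℤ → Bool)) : ℝ :=
  atTop.limsup fun n : ℕ => Real.logb 2 (pCount X n) / n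

def cylinder {n : ℕ} (w : Fin n → Bool) : Set (ℤ → Bool) := {x | ∀ i : Fin n, x ((i:ℕ):ℤ) = w i}

def blockEntropy (μ : Measure (ℤ → Bool)) (n : ℕ) : ℝ :=
  -∑ w : Fin n → Bool, ((μ (cylinder w)).toReal * Real.logb 2 (μ (cylinder w)).toReal)

def measEnt (μ : Measure (ℤ → Bool)) : ℝ := atTop.liminf fun n : ℕ => blockEntropy μ n / n

/-! ### Counting in windows, periodic sets and regular Toeplitz sequences -/

/-- The number of elements of `E` in the window `[k, k + n)`. -/
def wcount (E : Set ℤ) (k : ℤ) (n : ℕ) : ℕ :=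
  ∑ i ∈ Finset.range n, if k + (i : ℤ) ∈ E then 1 else 0

lemma wcount_mono {E F : Set ℤ} (h : E ⊆ F) (k : ℤ) (n : ℕ) : wcount E k n ≤ wcount F k n := by
  refine Finset.sum_le_sum fun i _ => ?_
  by_cases h1 : k + (i : ℤ) ∈ E
  · simp [h1, h h1]
  · simp [h1]

lemma wcount_union_le (E F : Set ℤ) (k : ℤ) (n : ℕ) :
    wcount (E ∪ F) k n ≤ wcount E k n + wcount F k n := by
  unfold wcount
  rw [← Finset.sum_add_distrib]
  refine Finset.sum_le_sum fun i _ => ?_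
  by_cases h1 : k + (i : ℤ) ∈ E <;> by_cases h2 : k + (i : ℤ) ∈ F <;> simp [h1, h2]

lemma wcount_le (E : Set ℤ) (k : ℤ) (n : ℕ) : wcount E k n ≤ n := by
  calc wcount E k n ≤ ∑ i ∈ Finset.range n, 1 :=
        Finset.sum_le_sum fun i _ => by split_ifs <;> simp
    _ = n := by simp

lemma wcount_compl (E : Set ℤ) (k : ℤ) (n : ℕ) : wcount E k n + wcount Eᶜ k n = n := by
  unfold wcount
  rw [← Finset.sum_add_distrib]
  calc _ = ∑ i ∈ Finset.range n, 1 := Finset.sum_congr rfl fun i _ => by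
        by_cases h1 : k + (i : ℤ) ∈ E <;> simp [h1]
    _ = n := by simp

lemma wcount_add (E : Set ℤ) (k : ℤ) (m n : ℕ) :
    wcount E k (m + n) = wcount E k m + wcount E (k + m) n := by
  unfold wcount
  rw [Finset.sum_range_add]
  simp [add_assoc]

lemma wcount_one (E : Set ℤ) (k : ℤ) : wcount E k 1 = if k ∈ E then 1 else 0 := by
  unfold wcount
  rw [Finset.sum_range_one]
  simp

lemma wcount_card (E : Set ℤ) (k : ℤ) (n : ℕ) :
    wcount E k n = ((Finset.range n).filter fun i : ℕ => k + (i : ℤ) ∈ E).card := by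
  simp [wcount]

/-- Invariance of a set of integers under translation by `Q`. -/
def PerSet (E : Set ℤ) (Q : ℕ) : Prop := ∀ i, i ∈ E ↔ i + (Q : ℤ) ∈ E

lemma PerSet.compl {E : Set ℤ} {Q : ℕ} (h : PerSet E Q) : PerSet Eᶜ Q := fun i =>
  not_congr (h i)

lemma PerSet.mul_nat {E : Set ℤ} {Q : ℕ} (h : PerSet E Q) (i : ℤ) (k : ℕ) :
    i ∈ E ↔ i + (Q : ℤ) * k ∈ E := by
  induction k with
  | zero => simp
  | succ k ih => rw [ih, h]; push_cast; ring_nf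

lemma PerSet.mul {E : Set ℤ} {Q : ℕ} (h : PerSet E Q) (i k : ℤ) :
    i ∈ E ↔ i + (Q : ℤ) * k ∈ E := by
  obtain ⟨n, rfl | rfl⟩ := k.eq_nat_or_neg
  · exact h.mul_nat i n
  · rw [h.mul_nat (i + Q * -n) n]; ring_nf

lemma PerSet.of_dvd {E : Set ℤ} {Q Q' : ℕ} (h : PerSet E Q) (hd : Q ∣ Q') : PerSet E Q' := by
  obtain ⟨c, rfl⟩ := hd
  intro i
  rw [h.mul_nat i c]; push_cast; rfl

lemma wcount_shift {E : Set ℤ} {Q : ℕ} (h : PerSet E Q) (k j : ℤ) (n : ℕ) :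
    wcount E (k + Q * j) n = wcount E k n := by
  unfold wcount
  refine Finset.sum_congr rfl fun i _ => ?_
  have : k + Q * j + (i : ℤ) ∈ E ↔ k + (i : ℤ) ∈ E := by
    rw [h.mul (k + i) j]; ring_nf
  simp [this]

lemma wcount_period {E : Set ℤ} {Q : ℕ} (h : PerSet E Q) (k : ℤ) :
    wcount E k Q = wcount E 0 Q := by
  have step : ∀ k : ℤ, wcount E (k + 1) Q = wcount E k Q := by
    intro k
    have h1 := wcount_add E k 1 Q
    have h2 := wcount_add E k Q 1
    have h3 := wcount_shift h k 1 1
    rw [add_comm 1 Q, h2] at h1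
    simp only [mul_one] at h3
    rw [h3] at h1
    push_cast at h1
    omega
  induction k using Int.induction_on with
  | zero => rfl
  | succ i ih => rw [step, ih]
  | pred i ih => rw [← ih, ← step]; ring_nf

lemma wcount_mul_period {E : Set ℤ} {Q : ℕ} (h : PerSet E Q) (k : ℤ) (j : ℕ) :
    wcount E k (j * Q) = j * wcount E 0 Q := by
  induction j with
  | zero => simp [wcount]
  | succ j ih => rw [add_mul, one_mul, wcount_add, ih, wcount_period h (k + _), add_mul, one_mul]

lemma wcount_le_of_period {E : Set ℤ} {Q : ℕ} (h : PerSet E Q) (hQ : 0 < Q) (k : ℤ) (n : ℕ) :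
    wcount E k n ≤ (n / Q + 1) * wcount E 0 Q := by
  rw [← wcount_mul_period h k]
  have hn : n ≤ (n / Q + 1) * Q := (Nat.lt_div_mul_add hQ).le.trans (by rw [add_mul, one_mul])
  obtain ⟨m, hm⟩ := Nat.exists_eq_add_of_le hn
  rw [hm, wcount_add]; omega

lemma le_wcount_of_period {E : Set ℤ} {Q : ℕ} (h : PerSet E Q) (k : ℤ) (n : ℕ) :
    (n / Q) * wcount E 0 Q ≤ wcount E k n := by
  rw [← wcount_mul_period h k]
  obtain ⟨m, hm⟩ := Nat.exists_eq_add_of_le (Nat.div_mul_le_self n Q)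
  rw [hm, wcount_add]
  have : (n / Q * Q + m) / Q * Q = n / Q * Q := by rw [← hm]
  rw [this]; omega

/-- The upper Banach density of `E` is at most `θ`, in the effective form that all long windows
`[k, k + n)` contain at most `θ n` elements of `E`. -/
def USmall (E : Set ℤ) (θ : ℝ) : Prop :=
  ∃ N₀ : ℕ, ∀ n ≥ N₀, ∀ k : ℤ, (wcount E k n : ℝ) ≤ θ * n

lemma USmall.mono {E F : Set ℤ} {θ θ' : ℝ} (h : USmall F θ) (hEF : E ⊆ F) (hθ : θ ≤ θ') :
    USmall E θ' := by
  obtain ⟨N, hN⟩ := h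
  refine ⟨N, fun n hn k => ?_⟩
  calc (wcount E k n : ℝ) ≤ wcount F k n := by exact_mod_cast wcount_mono hEF k n
    _ ≤ θ * n := hN n hn k
    _ ≤ θ' * n := by gcongr

lemma USmall.union {E F : Set ℤ} {θ θ' : ℝ} (h : USmall E θ) (h' : USmall F θ') :
    USmall (E ∪ F) (θ + θ') := by
  obtain ⟨N, hN⟩ := h
  obtain ⟨N', hN'⟩ := h'
  refine ⟨max N N', fun n hn k => ?_⟩
  have h1 : (wcount (E ∪ F) k n : ℝ) ≤ wcount E k n + wcount F k n := by
    exact_mod_cast wcount_union_le E F k n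
  have := hN n (le_trans (le_max_left _ _) hn) k
  have := hN' n (le_trans (le_max_right _ _) hn) k
  linarith

lemma USmall.biUnion {ι : Type*} (s : Finset ι) (E : ι → Set ℤ) (θ : ℝ)
    (h : ∀ i ∈ s, USmall (E i) θ) : USmall (⋃ i ∈ s, E i) (s.card * θ) := by
  induction s using Finset.induction_on with
  | empty => exact ⟨0, fun n _ k => by simp [wcount]⟩
  | insert a s ha ih =>
    rw [Finset.set_biUnion_insert, Finset.card_insert_of_notMem ha]
    refine ((h a (by simp)).union (ih fun i hi => h i (by simp [hi]))).mono subset_rfl ?_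
    push_cast; linarith

lemma USmall.of_period {E : Set ℤ} {Q : ℕ} (h : PerSet E Q) (hQ : 0 < Q) {ρ θ : ℝ}
    (hρ : (wcount E 0 Q : ℝ) ≤ ρ * Q) (hθ : ρ < θ) : USmall E θ := by
  have hQ' : (0 : ℝ) < Q := by exact_mod_cast hQ
  obtain ⟨N, hN⟩ := exists_nat_ge (ρ * Q / (θ - ρ))
  refine ⟨N, fun n hn k => ?_⟩
  have h0 : 0 ≤ ρ * Q := le_trans (Nat.cast_nonneg _) hρ
  have h1 : (wcount E k n : ℝ) ≤ ((n / Q : ℕ) + 1) * wcount E 0 Q := by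
    exact_mod_cast wcount_le_of_period h hQ k n
  have h2 : ((n / Q : ℕ) : ℝ) ≤ n / Q := Nat.cast_div_le
  have h3 : (wcount E k n : ℝ) ≤ (n / Q + 1) * (ρ * Q) := h1.trans (by gcongr)
  have h4 : (n / Q + 1) * (ρ * Q) = ρ * n + ρ * Q := by field_simp
  have h5 : ρ * Q / (θ - ρ) ≤ n := hN.trans (by exact_mod_cast hn)
  rw [div_le_iff₀ (by linarith)] at h5
  nlinarith

lemma PerSet_iUnion_Per (x : ℤ → Bool) (r : ℕ) :
    PerSet (⋃ s ∈ Finset.Icc 1 r, Per x s) r.factorial := by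
  have key : ∀ (i : ℤ) (s : ℕ) (m : ℤ), i ∈ Per x s → i + s * m ∈ Per x s := by
    intro i s m h k
    have h1 := h (m + k)
    have h2 := h m
    rw [h2, ← h1]; ring_nf
  intro i
  simp only [Set.mem_iUnion, Finset.mem_Icc]
  constructor
  · rintro ⟨s, hs, h⟩
    obtain ⟨c, hc⟩ := Nat.dvd_factorial (by omega : 0 < s) hs.2
    refine ⟨s, hs, ?_⟩
    have := key i s c h
    rw [hc]; push_cast; exact this
  · rintro ⟨s, hs, h⟩
    obtain ⟨c, hc⟩ := Nat.dvd_factorial (by omega : 0 < s) hs.2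
    refine ⟨s, hs, ?_⟩
    have := key _ s (-c) h
    rw [hc] at this; push_cast at this
    have h2 : i + (s:ℤ) * c + s * -c = i := by ring
    rwa [h2] at this

lemma cnt_eq_wcount (E : Set ℤ) (L : ℕ) : cnt E L = wcount E 1 L := by
  unfold cnt wcount
  induction L with
  | zero => simp
  | succ L ih =>
    rw [Finset.sum_range_succ]
    have : Finset.Icc (1:ℤ) ((L + 1 : ℕ) : ℤ) = insert ((L:ℤ) + 1) (Finset.Icc (1:ℤ) (L:ℤ)) := by
      ext z; simp only [Finset.mem_Icc, Finset.mem_insert]; push_cast; omega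
    rw [this, Finset.sum_insert (by simp), ih]
    push_cast
    rw [add_comm, add_comm (L:ℤ) 1]

/-- A regular Toeplitz sequence is, outside a periodic set of arbitrarily small density, periodic. -/
lemma RegularToeplitz.exists_period {x : ℤ → Bool} (hx : RegularToeplitz x) {ε : ℝ} (hε : 0 < ε) :
    ∃ (Q : ℕ) (R : Set ℤ), 0 < Q ∧ PerSet R Q ∧ (∀ i ∈ R, ∀ k : ℤ, x (i + Q * k) = x i) ∧
      (wcount Rᶜ 0 Q : ℝ) ≤ ε * Q := by
  obtain ⟨-, δ, hδ, hlim⟩ := hx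
  obtain ⟨r, hr⟩ := (hlim.eventually (lt_mem_nhds (show 1 - ε < 1 by linarith))).exists
  set R := ⋃ s ∈ Finset.Icc 1 r, Per x s with hR
  have hper : PerSet R r.factorial := PerSet_iUnion_Per x r
  have hQ := r.factorial_pos
  have hQ' : (0 : ℝ) < r.factorial := by exact_mod_cast hQ
  refine ⟨r.factorial, R, hQ, hper, ?_, ?_⟩
  · intro i hi k
    simp only [hR, Set.mem_iUnion, Finset.mem_Icc] at hi
    obtain ⟨s, hs, h⟩ := hi
    obtain ⟨c, hc⟩ := Nat.dvd_factorial (by omega : 0 < s) hs.2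
    rw [hc, ← h (c * k)]; push_cast; ring_nf
  · have h1 : Tendsto (fun j : ℕ => (j + 1) * r.factorial) atTop atTop :=
      tendsto_atTop_mono (fun j => by simp only [id]; nlinarith) tendsto_id
    have h2 := (hδ r).comp h1
    have h3 : (fun L : ℕ => cnt R L / L) ∘ (fun j : ℕ => (j + 1) * r.factorial) =
        fun _ => (wcount R 0 r.factorial : ℝ) / r.factorial := by
      funext j
      simp only [Function.comp]
      rw [cnt_eq_wcount, wcount_mul_period hper]
      push_cast
      have : (j : ℝ) + 1 ≠ 0 := by positivity
      field_simp
    rw [h3] at h2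
    have h4 := tendsto_nhds_unique h2 tendsto_const_nhds
    rw [h4, lt_div_iff₀ hQ'] at hr
    have h5 : (wcount R 0 r.factorial : ℝ) + wcount Rᶜ 0 r.factorial = r.factorial := by
      exact_mod_cast wcount_compl R 0 r.factorial
    linarith

/-! ### The set `Dset B`: closure property, residue classes and windows -/

lemma exists_coprime_mem {A : Set ℕ} (hinf : A.Infinite) (hco : A.Pairwise Nat.Coprime)
    {P : ℕ} (hP : 0 < P) : ∃ a ∈ A, 2 ≤ a ∧ a.Coprime P := by
  by_contra! hcon
  -- every element of `A` outside `{0, 1}` shares a prime with `P`, and different elements give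
  -- different primes
  have hA' : (A \ {0, 1}).Infinite := hinf.sdiff (Set.toFinite _)
  have h2 : ∀ a ∈ A \ {0, 1}, 2 ≤ a := by
    rintro a ⟨-, ha⟩
    simp only [Set.mem_insert_iff, Set.mem_singleton_iff, not_or] at ha
    omega
  have hmaps : Set.MapsTo (fun a : ℕ => (Nat.gcd a P).minFac) (A \ {0, 1})
      (P.primeFactors : Set ℕ) := by
    intro a ha
    have hne : Nat.gcd a P ≠ 1 := hcon a ha.1 (h2 a ha)
    simp only [Finset.mem_coe, Nat.mem_primeFactors]
    exact ⟨Nat.minFac_prime hne, (Nat.minFac_dvd _).trans (Nat.gcd_dvd_right _ _), hP.ne'⟩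
  obtain ⟨a, ha, b, hb, hab, heq⟩ :=
    hA'.exists_ne_map_eq_of_mapsTo hmaps (Finset.finite_toSet _)
  have hne : Nat.gcd a P ≠ 1 := hcon a ha.1 (h2 a ha)
  have hp := Nat.minFac_prime hne
  have h3 : (Nat.gcd a P).minFac ∣ a := (Nat.minFac_dvd _).trans (Nat.gcd_dvd_left _ _)
  have h4 : (Nat.gcd a P).minFac ∣ b := by
    rw [heq]; exact (Nat.minFac_dvd _).trans (Nat.gcd_dvd_left _ _)
  exact Nat.not_coprime_of_dvd_of_dvd hp.one_lt h3 h4 (hco ha.1 hb.1 hab)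

lemma Dset_exists {B : Set ℕ} {d : ℕ} (hd : d ∈ Dset B) {P : ℕ} (hP : 0 < P) :
    ∃ a, 2 ≤ a ∧ a.Coprime P ∧ d * a ∈ B := by
  obtain ⟨A, hinf, -, hco, hA⟩ := hd
  obtain ⟨a, ha, h2, h3⟩ := exists_coprime_mem hinf hco hP
  exact ⟨a, h2, h3, hA a ha⟩

/-- Elements chosen greedily, each coprime to all the preceding ones, form the infinite pairwise
coprime set required for `d ∈ Dset B`. -/
lemma mem_Dset_of {B : Set ℕ} {d : ℕ}
    (h : ∀ P : ℕ, 0 < P → ∃ a, 2 ≤ a ∧ a.Coprime P ∧ d * a ∈ B) : d ∈ Dset B := by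
  obtain ⟨f, hf, hf'⟩ := exists_seq_of_forall_finset_exists
    (fun a : ℕ => 2 ≤ a ∧ d * a ∈ B) (fun a b => Nat.Coprime a b) (by
      intro s hs
      obtain ⟨a, h2, hco, hB⟩ := h (∏ x ∈ s, x)
        (Finset.prod_pos fun x hx => by have := (hs x hx).1; omega)
      exact ⟨a, ⟨h2, hB⟩, fun x hx => (hco.coprime_dvd_right (Finset.dvd_prod_of_mem _ hx)).symm⟩)
  have hco : ∀ m n, m ≠ n → Nat.Coprime (f m) (f n) := by
    intro m n hmn
    rcases lt_or_gt_of_ne hmn with h | h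
    · exact hf' m n h
    · exact (hf' n m h).symm
  have hinj : Function.Injective f := by
    intro m n hmn
    by_contra hne
    have h1 := hco m n hne
    rw [hmn, Nat.coprime_self] at h1
    have := (hf n).1; omega
  refine ⟨Set.range f, Set.infinite_range_of_injective hinj, ?_, ?_, ?_⟩
  · rintro _ ⟨m, rfl⟩
    have := (hf m).1; omega
  · rintro _ ⟨m, rfl⟩ _ ⟨n, rfl⟩ hne
    exact hco m n fun h => hne (by rw [h])
  · rintro _ ⟨m, rfl⟩
    exact (hf m).2

/-- Adjoining `Dset B` is an idempotent operation. -/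
lemma mem_Dset_of_union {B : Set ℕ} {d : ℕ}
    (h : ∀ P : ℕ, 0 < P → ∃ a, 2 ≤ a ∧ a.Coprime P ∧ d * a ∈ B ∪ Dset B) : d ∈ Dset B := by
  refine mem_Dset_of fun P hP => ?_
  obtain ⟨a, h2, hco, hB | hD⟩ := h P hP
  · exact ⟨a, h2, hco, hB⟩
  · obtain ⟨c, hc2, hcco, hcB⟩ := Dset_exists hD hP
    exact ⟨a * c, by nlinarith, hco.mul_left hcco, by rwa [← mul_assoc]⟩

lemma pos_of_mem_union {B : Set ℕ} (hB : 0 ∉ B) {d : ℕ} (hd : d ∈ B ∪ Dset B) : 0 < d := by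
  rcases Nat.eq_zero_or_pos d with rfl | h
  · rcases hd with hd | hd
    · exact absurd hd hB
    · obtain ⟨a, -, -, h⟩ := Dset_exists hd one_pos
      rw [zero_mul] at h
      exact absurd h hB
  · exact h

/-- Passing to the primitive part does not change the set of multiples. -/
lemma MB_Bstar {B : Set ℕ} (hB : 0 ∉ B) : MB (Bstar B) = MB (B ∪ Dset B) := by
  have key : ∀ b : ℕ, b ∈ B ∪ Dset B → ∃ c ∈ Bstar B, c ∣ b := by
    intro b
    induction b using Nat.strong_induction_on with
    | _ b ih =>
      intro hb
      by_cases hmin : ∀ b' ∈ B ∪ Dset B, b' ∣ b → b' = b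
      · exact ⟨b, ⟨hb, hmin⟩, dvd_rfl⟩
      · push Not at hmin
        obtain ⟨b', hb', hdvd, hne⟩ := hmin
        obtain ⟨c, hc, hcb⟩ := ih b'
          (lt_of_le_of_ne (Nat.le_of_dvd (pos_of_mem_union hB hb) hdvd) hne) hb'
        exact ⟨c, hc, hcb.trans hdvd⟩
  ext n
  constructor
  · rintro ⟨b, hb, h⟩
    exact ⟨b, hb.1, h⟩
  · rintro ⟨b, hb, h⟩
    obtain ⟨c, hc, hcb⟩ := key b hb
    exact ⟨c, hc, (Int.natCast_dvd_natCast.2 hcb).trans h⟩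

/-- If a whole residue class `i + Qℤ` consists of multiples of `B ∪ Dset B`, then so does
`gcd(i, Q)ℤ`: by Dirichlet's theorem the class contains `gcd(i, Q) p` for infinitely many primes
`p`, and `B ∪ Dset B` is closed under forming `Dset`. -/
lemma exists_dvd_gcd_of_progression {B : Set ℕ} {Q : ℕ} (hQ : 0 < Q) {i : ℤ}
    (h : ∀ k : ℤ, i + Q * k ∈ MB (B ∪ Dset B)) :
    ∃ b ∈ B ∪ Dset B, b ∣ Q ∧ (b : ℤ) ∣ i := by
  set g : ℕ := Int.gcd i Q with hg
  have hgpos : 0 < g := Int.gcd_pos_of_ne_zero_right _ (by exact_mod_cast hQ.ne')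
  suffices hs : ∃ b ∈ B ∪ Dset B, b ∣ g by
    obtain ⟨b, hb, hbg⟩ := hs
    refine ⟨b, hb, ?_, ?_⟩
    · exact hbg.trans (Int.natCast_dvd_natCast.1 (Int.gcd_dvd_right i Q))
    · exact (Int.natCast_dvd_natCast.2 hbg).trans (Int.gcd_dvd_left i Q)
  by_contra! hcon
  -- each proper quotient `g'` fails the criterion for `Dset`, with some obstruction `P g'`
  have hP : ∀ g' : ℕ, ∃ P : ℕ, 0 < P ∧ (g' ∣ g →
      ∀ a, 2 ≤ a → a.Coprime P → g' * a ∉ B ∪ Dset B) := by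
    intro g'
    by_cases hg' : g' ∣ g
    · by_contra! hno
      refine hcon g' (Or.inr (mem_Dset_of_union fun P hP => ?_)) hg'
      obtain ⟨-, a, h2, h3, h4⟩ := hno P hP
      exact ⟨a, h2, h3, h4⟩
    · exact ⟨1, one_pos, fun h => absurd h hg'⟩
  choose P hPpos hP using hP
  obtain ⟨i', hi'⟩ : (g : ℤ) ∣ i := Int.gcd_dvd_left i Q
  obtain ⟨Q', hQ'⟩ : g ∣ Q := Int.natCast_dvd_natCast.1 (Int.gcd_dvd_right i Q)
  have hQ'pos : 0 < Q' := Nat.pos_of_ne_zero (by rintro rfl; simp at hQ'; omega)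
  have : NeZero Q' := ⟨hQ'pos.ne'⟩
  have hco : Int.gcd i' Q' = 1 := by
    have h1 : Int.gcd i Q = g * Int.gcd i' Q' := by
      rw [hi', hQ']; push_cast; rw [Int.gcd_mul_left]; simp
    rw [← hg] at h1
    exact Nat.eq_of_mul_eq_mul_left hgpos (by rw [← h1, mul_one])
  have hunit : IsUnit ((i' : ℤ) : ZMod Q') := by
    rw [ZMod.coe_int_isUnit_iff_isCoprime]
    exact (Int.isCoprime_iff_gcd_eq_one.2 hco).symm
  obtain ⟨p, hpgt, hpp, hpeq⟩ := Nat.forall_exists_prime_gt_and_eq_mod hunit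
    (∑ g' ∈ g.divisors, P g')
  have hpeq' : ((p : ℤ) : ZMod Q') = ((i' : ℤ) : ZMod Q') := by rw [← hpeq]; simp
  rw [ZMod.intCast_eq_intCast_iff_dvd_sub] at hpeq'
  obtain ⟨k, hk⟩ := hpeq'
  obtain ⟨b, hb, hbdvd⟩ := h (-k)
  have h1 : i + Q * -k = ((g * p : ℕ) : ℤ) := by
    rw [hi', hQ']; push_cast; linear_combination (g : ℤ) * hk
  rw [h1, Int.natCast_dvd_natCast] at hbdvd
  by_cases hpb : p ∣ b
  · obtain ⟨g', rfl⟩ := hpb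
    have hg' : g' ∣ g := by
      rw [mul_comm g p] at hbdvd
      exact Nat.dvd_of_mul_dvd_mul_left hpp.pos hbdvd
    have hle : P g' ≤ ∑ g' ∈ g.divisors, P g' :=
      Finset.single_le_sum (f := P) (fun _ _ => Nat.zero_le _)
        (Nat.mem_divisors.2 ⟨hg', hgpos.ne'⟩)
    refine hP g' hg' p hpp.two_le ?_ (by rwa [mul_comm])
    rw [Nat.Prime.coprime_iff_not_dvd hpp]
    exact fun hd => absurd (Nat.le_of_dvd (hPpos g') hd) (by omega)
  · refine hcon b hb ?_
    exact Nat.Coprime.dvd_of_dvd_mul_right ((Nat.Prime.coprime_iff_not_dvd hpp).2 hpb).symm hbdvd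

/-- There are windows `[l, l + n)` with `Q ∣ l` in which every multiple of an element of
`B ∪ Dset B` dividing `Q` is a multiple of an element of `B`. The modulus `P`, to which the `l` of
one length can be shifted without harm, carries the induction on the length. -/
lemma exists_window_full {B : Set ℕ} {Q : ℕ} (hQ : 0 < Q) (n : ℕ) :
    ∃ P l : ℕ, 0 < P ∧ Q ∣ P ∧ Q ∣ l ∧ ∀ i < n, (∃ d ∈ B ∪ Dset B, d ∣ Q ∧ d ∣ i) →
      ∀ m : ℕ, m ≡ l [MOD P] → ((m + i : ℕ) : ℤ) ∈ MB B := by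
  induction n with
  | zero => exact ⟨Q, 0, hQ, dvd_rfl, dvd_zero _, by simp⟩
  | succ n ih =>
    obtain ⟨P, l, hP, hQP, hQl, h⟩ := ih
    by_cases hd : ∃ d ∈ B ∪ Dset B, d ∣ Q ∧ d ∣ n
    · obtain ⟨d, hdB | hdD, hdQ, hdn⟩ := hd
      · refine ⟨P, l, hP, hQP, hQl, fun i hi hex m hm => ?_⟩
        rcases Nat.lt_succ_iff_lt_or_eq.1 hi with hi | rfl
        · exact h i hi hex m hm
        · refine ⟨d, hdB, ?_⟩
          have : d ∣ m := ((hm.of_dvd (hdQ.trans hQP)).dvd_iff dvd_rfl).2 (hdQ.trans hQl)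
          exact_mod_cast Dvd.dvd.add this hdn
      · obtain ⟨a, ha2, haP, haB⟩ := Dset_exists hdD hP
        obtain ⟨l', h1, h2⟩ := Nat.chineseRemainder haP.symm l (n * (a - 1))
        have hl'Q : Q ∣ l' := ((h1.of_dvd hQP).dvd_iff dvd_rfl).2 hQl
        refine ⟨P * a, l', by positivity, hQP.mul_right a, hl'Q, fun i hi hex m hm => ?_⟩
        rcases Nat.lt_succ_iff_lt_or_eq.1 hi with hi | rfl
        · exact h i hi hex m ((hm.of_dvd (Nat.dvd_mul_right P a)).trans h1)
        · refine ⟨d * a, haB, ?_⟩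
          have hmQ : Q ∣ m := ((hm.of_dvd (hQP.mul_right a)).dvd_iff dvd_rfl).2 hl'Q
          have hda : Nat.Coprime d a := (haP.coprime_dvd_right (hdQ.trans hQP)).symm
          have h3 : d ∣ m + i := (hdQ.trans hmQ).add hdn
          have h4 : a ∣ m + i := by
            have h5 : m + i ≡ i * (a - 1) + i [MOD a] :=
              Nat.ModEq.add_right _ ((hm.of_dvd (Nat.dvd_mul_left a P)).trans h2)
            refine (h5.dvd_iff dvd_rfl).2 ?_
            have : i * (a - 1) + i = i * a := by
              obtain ⟨c, rfl⟩ : ∃ c, a = c + 1 := ⟨a - 1, by omega⟩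
              simp; ring
            rw [this]; exact Nat.dvd_mul_left a i
          exact_mod_cast hda.mul_dvd_of_dvd_of_dvd h3 h4
    · refine ⟨P, l, hP, hQP, hQl, fun i hi hex m hm => ?_⟩
      rcases Nat.lt_succ_iff_lt_or_eq.1 hi with hi | rfl
      · exact h i hi hex m hm
      · exact absurd hex hd

/-- A residue class `r` mod `Q` such that `m + j` is a multiple of `C` for all `m` in the class and
`j ∈ S`, while `m + i` is coprime to `Q` for the other `i < n`. -/
lemma exists_class_remove {C : Set ℕ}
    (hC : ∀ P : ℕ, 0 < P → ∃ a, 2 ≤ a ∧ a.Coprime P ∧ a ∈ C) (n : ℕ)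
    (S : Finset ℕ) (hS : S ⊆ Finset.range n) :
    ∃ Q r : ℕ, 0 < Q ∧ (∀ j ∈ S, ∃ a ∈ C, a ∣ Q ∧ a ∣ r + j) ∧
      ∀ i < n, i ∉ S → (r + i).Coprime Q := by
  induction S using Finset.induction_on with
  | empty => exact ⟨1, 0, one_pos, by simp, by simp⟩
  | insert j S hj ih =>
    obtain ⟨Q, r, hQ, h1, h2⟩ := ih ((Finset.subset_insert j S).trans hS)
    obtain ⟨a, ha2, hco, haC⟩ := hC (Q * n.factorial) (by positivity)
    have haQ : a.Coprime Q := hco.coprime_dvd_right (Nat.dvd_mul_right _ _)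
    have han : a.Coprime n.factorial := hco.coprime_dvd_right (Nat.dvd_mul_left _ _)
    obtain ⟨r', e1, e2⟩ := Nat.chineseRemainder haQ.symm r (j * (a - 1))
    have hjn : j < n := Finset.mem_range.1 (hS (Finset.mem_insert_self j S))
    have haj : a ∣ r' + j := by
      have h5 : r' + j ≡ j * (a - 1) + j [MOD a] := Nat.ModEq.add_right _ e2
      refine (h5.dvd_iff dvd_rfl).2 ?_
      have : j * (a - 1) + j = j * a := by
        obtain ⟨c, rfl⟩ : ∃ c, a = c + 1 := ⟨a - 1, by omega⟩
        simp; ring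
      rw [this]; exact Nat.dvd_mul_left a j
    refine ⟨Q * a, r', by positivity, ?_, ?_⟩
    · intro j' hj'
      rcases Finset.mem_insert.1 hj' with rfl | hj'
      · exact ⟨a, haC, Nat.dvd_mul_left a Q, haj⟩
      · obtain ⟨c, hc, hcQ, hcr⟩ := h1 j' hj'
        refine ⟨c, hc, hcQ.mul_right a, ?_⟩
        exact (((e1.add_right j').of_dvd hcQ).dvd_iff dvd_rfl).2 hcr
    · intro i hi hiS
      rw [Finset.mem_insert, not_or] at hiS
      have h3 : (r' + i).Coprime Q := by
        have := (e1.add_right i).gcd_eq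
        unfold Nat.Coprime
        rw [this]; exact h2 i hi hiS.2
      have h4 : (r' + i).Coprime a := by
        refine Nat.coprime_of_dvd fun p hp hpi hpa => ?_
        have hpj : p ∣ r' + j := hpa.trans haj
        have hpn : p ∣ n.factorial := by
          rcases lt_or_gt_of_ne hiS.1 with hlt | hlt
          · have h6 : p ∣ (r' + j) - (r' + i) := Nat.dvd_sub hpj hpi
            rw [Nat.add_sub_add_left] at h6
            exact h6.trans (Nat.dvd_factorial (by omega) (by omega))
          · have h6 : p ∣ (r' + i) - (r' + j) := Nat.dvd_sub hpi hpj
            rw [Nat.add_sub_add_left] at h6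
            exact h6.trans (Nat.dvd_factorial (by omega) (by omega))
        exact Nat.not_coprime_of_dvd_of_dvd hp.one_lt hpa hpn han
      exact Nat.Coprime.mul_right h3 h4

/-! ### Zeta-weighted counts -/

/-- The real Dirichlet series `∑ f(n) n^{-t}` (the term `n = 0` vanishes for `t ≠ 0`). -/
def rL (f : ℕ → ℝ) (t : ℝ) : ℝ := ∑' n : ℕ, f n * (n : ℝ) ^ (-t)

lemma term_ofReal (f : ℕ → ℝ) {t : ℝ} (ht : t ≠ 0) (n : ℕ) :
    LSeries.term (fun n => (f n : ℂ)) t n = ((f n * (n : ℝ) ^ (-t) : ℝ) : ℂ) := by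
  rw [LSeries.term_def]
  split_ifs with h
  · subst h; simp [Real.zero_rpow (neg_ne_zero.2 ht)]
  · rw [Real.rpow_neg (Nat.cast_nonneg n)]
    push_cast
    rw [Complex.ofReal_cpow (Nat.cast_nonneg n)]
    simp [div_eq_mul_inv]

lemma LSeries_ofReal (f : ℕ → ℝ) {t : ℝ} (ht : t ≠ 0) :
    LSeries (fun n => (f n : ℂ)) t = (rL f t : ℂ) := by
  unfold LSeries rL
  rw [Complex.ofReal_tsum]
  exact tsum_congr fun n => term_ofReal f ht n

lemma LSeriesSummable_ofReal (f : ℕ → ℝ) {t : ℝ} (ht : t ≠ 0)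
    (h : Summable fun n : ℕ => f n * (n : ℝ) ^ (-t)) :
    LSeriesSummable (fun n => (f n : ℂ)) t := by
  unfold LSeriesSummable
  have : LSeries.term (fun n => (f n : ℂ)) t = fun n => ((f n * (n : ℝ) ^ (-t) : ℝ) : ℂ) :=
    funext fun n => term_ofReal f ht n
  rw [this]
  exact_mod_cast h

lemma rL_summable {f : ℕ → ℝ} (hf0 : ∀ n, 0 ≤ f n) (hf1 : ∀ n, f n ≤ 1) {t : ℝ} (ht : 1 < t) :
    Summable fun n : ℕ => f n * (n : ℝ) ^ (-t) := by
  refine Summable.of_nonneg_of_le (fun n => mul_nonneg (hf0 n) (by positivity)) (fun n => ?_)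
    (Real.summable_nat_rpow.2 (by linarith : -t < -1))
  exact mul_le_of_le_one_left (by positivity) (hf1 n)

/-- The weighted count `∑_{n ≥ 1, n ∈ E} n^{-t}`. -/
def zsum (E : Set ℤ) (t : ℝ) : ℝ := rL (fun n => if (n : ℤ) ∈ E then 1 else 0) t

lemma zsum_summable (E : Set ℤ) {t : ℝ} (ht : 1 < t) :
    Summable fun n : ℕ => (if (n : ℤ) ∈ E then (1 : ℝ) else 0) * (n : ℝ) ^ (-t) :=
  rL_summable (fun n => by split_ifs <;> simp) (fun n => by split_ifs <;> simp) ht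

lemma zsum_nonneg (E : Set ℤ) (t : ℝ) : 0 ≤ zsum E t :=
  tsum_nonneg fun n => mul_nonneg (by dsimp only; split_ifs <;> simp) (by positivity)

lemma zsum_mono {E F : Set ℤ} (h : E ⊆ F) {t : ℝ} (ht : 1 < t) : zsum E t ≤ zsum F t := by
  refine Summable.tsum_le_tsum (fun n => ?_) (zsum_summable E ht) (zsum_summable F ht)
  refine mul_le_mul_of_nonneg_right ?_ (by positivity)
  by_cases h1 : (n : ℤ) ∈ E
  · simp [h1, h h1]
  · simp only [h1, if_false]; split_ifs <;> simp

lemma zsum_union_le (E F : Set ℤ) {t : ℝ} (ht : 1 < t) :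
    zsum (E ∪ F) t ≤ zsum E t + zsum F t := by
  unfold zsum rL
  rw [← (zsum_summable E ht).tsum_add (zsum_summable F ht)]
  refine Summable.tsum_le_tsum (fun n => ?_) (zsum_summable _ ht)
    ((zsum_summable E ht).add (zsum_summable F ht))
  rw [← add_mul]
  refine mul_le_mul_of_nonneg_right ?_ (by positivity)
  by_cases h1 : (n : ℤ) ∈ E <;> by_cases h2 : (n : ℤ) ∈ F <;> simp [h1, h2]

lemma zsum_diff {E F : Set ℤ} (h : E ⊆ F) {t : ℝ} (ht : 1 < t) :
    zsum (F \ E) t = zsum F t - zsum E t := by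
  unfold zsum rL
  rw [← (zsum_summable F ht).tsum_sub (zsum_summable E ht)]
  refine tsum_congr fun n => ?_
  rw [← sub_mul]
  congr 1
  by_cases h1 : (n : ℤ) ∈ E
  · simp [h1, h h1]
  · by_cases h2 : (n : ℤ) ∈ F <;> simp [h1, h2]

lemma zsum_univ_pos {t : ℝ} (ht : 1 < t) : 0 < zsum Set.univ t := by
  have := (zsum_summable Set.univ ht).sum_le_tsum {1}
    (fun n _ => mul_nonneg (by split_ifs <;> simp) (by positivity))
  simp only [Finset.sum_singleton] at this
  unfold zsum rL
  refine lt_of_lt_of_le ?_ this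
  simp

/-- A set of positive integers of natural density `l` has analytic density `l`. -/
lemma zsum_tendsto_of_density {E : Set ℤ} {l : ℝ}
    (h : Tendsto (fun n : ℕ => (wcount E 1 n : ℝ) / n) atTop (𝓝 l)) :
    Tendsto (fun t : ℝ => (t - 1) * zsum E t) (𝓝[>] 1) (𝓝 l) := by
  have h1 := LSeries_tendsto_sub_mul_nhds_one_of_tendsto_sum_div_and_nonneg
    (fun n : ℕ => if (n : ℤ) ∈ E then (1 : ℝ) else 0) (l := l) ?_
    (fun n => by split_ifs <;> simp)
  · have h2 := (Complex.continuous_re.tendsto _).comp h1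
    refine (h2.congr' ?_)
    filter_upwards [self_mem_nhdsWithin] with t ht
    have ht' : t ≠ 0 := by have : (1:ℝ) < t := ht; linarith
    simp only [Function.comp]
    rw [LSeries_ofReal _ ht']
    unfold zsum
    rw [← Complex.ofReal_one, ← Complex.ofReal_sub, ← Complex.ofReal_mul, Complex.ofReal_re]
  · refine h.congr fun n => ?_
    congr 1
    unfold wcount
    push_cast
    have h2 := Finset.sum_Ico_add' (fun k : ℕ => if (k : ℤ) ∈ E then (1 : ℝ) else 0) 0 n 1
    rw [zero_add] at h2
    change _ = ∑ k ∈ Finset.Ico 1 (n + 1), if (k : ℤ) ∈ E then (1 : ℝ) else 0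
    rw [← h2, Finset.range_eq_Ico]
    refine Finset.sum_congr rfl fun i _ => ?_
    push_cast
    rw [add_comm]

lemma wcount_density {E : Set ℤ} {Q : ℕ} (h : PerSet E Q) (hQ : 0 < Q) (k : ℤ) :
    Tendsto (fun n : ℕ => (wcount E k n : ℝ) / n) atTop (𝓝 ((wcount E 0 Q : ℝ) / Q)) := by
  set c : ℝ := (wcount E 0 Q : ℝ) with hc
  have hc0 : 0 ≤ c := Nat.cast_nonneg _
  have hQ' : (0 : ℝ) < Q := by exact_mod_cast hQ
  have hlim : Tendsto (fun n : ℕ => c / (n : ℝ)) atTop (𝓝 0) :=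
    tendsto_const_div_atTop_nhds_zero_nat c
  have hlo : Tendsto (fun n : ℕ => c / Q - c / (n : ℝ)) atTop (𝓝 (c / Q)) := by
    simpa using hlim.const_sub (c / Q)
  have hhi : Tendsto (fun n : ℕ => c / Q + c / (n : ℝ)) atTop (𝓝 (c / Q)) := by
    simpa using hlim.const_add (c / Q)
  refine tendsto_of_tendsto_of_tendsto_of_le_of_le' hlo hhi ?_ ?_
  · filter_upwards [eventually_gt_atTop 0] with n hn
    have hn' : (0 : ℝ) < n := by exact_mod_cast hn
    have h1 : ((n / Q : ℕ) : ℝ) * c ≤ wcount E k n := by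
      rw [hc]; exact_mod_cast le_wcount_of_period h k n
    have h2 : (n : ℝ) / Q - 1 ≤ (n / Q : ℕ) := by
      rw [sub_le_iff_le_add, div_le_iff₀ hQ']
      have := (Nat.lt_div_mul_add (a := n) hQ).le
      have h3 : (n : ℝ) ≤ (n / Q : ℕ) * Q + Q := by exact_mod_cast this
      linarith
    rw [le_div_iff₀ hn']
    have : (c / Q - c / n) * n = (n / Q - 1) * c := by field_simp
    rw [this]
    exact (mul_le_mul_of_nonneg_right h2 hc0).trans h1
  · filter_upwards [eventually_gt_atTop 0] with n hn
    have hn' : (0 : ℝ) < n := by exact_mod_cast hn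
    have h1 : (wcount E k n : ℝ) ≤ ((n / Q : ℕ) + 1) * c := by
      rw [hc]; exact_mod_cast wcount_le_of_period h hQ k n
    have h2 : ((n / Q : ℕ) : ℝ) ≤ n / Q := Nat.cast_div_le
    rw [div_le_iff₀ hn']
    have : (c / Q + c / n) * n = (n / Q + 1) * c := by field_simp
    rw [this]
    exact h1.trans (by gcongr)

lemma zsum_tendsto {E : Set ℤ} {Q : ℕ} (h : PerSet E Q) (hQ : 0 < Q) :
    Tendsto (fun t : ℝ => (t - 1) * zsum E t) (𝓝[>] 1) (𝓝 ((wcount E 0 Q : ℝ) / Q)) :=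
  zsum_tendsto_of_density (wcount_density h hQ 1)

lemma zsum_univ_tendsto :
    Tendsto (fun t : ℝ => (t - 1) * zsum Set.univ t) (𝓝[>] 1) (𝓝 1) := by
  have := zsum_tendsto (E := Set.univ) (Q := 1) (fun i => by simp) one_pos
  rw [wcount_one] at this
  simpa using this

/-! ### Monotonicity of the zeta distribution on sets of multiples -/

open ArithmeticFunction in
/-- There is a nonnegative function `ψ` with `∑_{d ∣ n} ψ(d) = n^u` (Jordan's totient of real
order `u ≥ 0`). -/
lemma exists_jordan {u : ℝ} (hu : 0 ≤ u) :
    ∃ ψ : ℕ → ℝ, (∀ n, 0 ≤ ψ n) ∧ ∀ n : ℕ, 0 < n → ∑ d ∈ n.divisors, ψ d = (n : ℝ) ^ u := by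
  let f : ArithmeticFunction ℝ := ⟨fun n => if n = 0 then 0 else (n : ℝ) ^ u, by simp⟩
  have hfn : ∀ n, 0 < n → f n = (n : ℝ) ^ u := by
    intro n hn; simp [f, hn.ne']
  have hf : f.IsMultiplicative := by
    rw [IsMultiplicative.iff_ne_zero]
    refine ⟨by simp [f], ?_⟩
    intro m n hm hn _
    rw [hfn _ (by positivity), hfn m (by omega), hfn n (by omega)]
    push_cast
    exact Real.mul_rpow (by positivity) (by positivity)
  let ψ : ArithmeticFunction ℝ := (moebius : ArithmeticFunction ℝ) * f
  have hψ : ψ.IsMultiplicative := isMultiplicative_moebius.intCast.mul hf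
  have hsum : ∀ n, ∑ d ∈ n.divisors, ψ d = f n := by
    intro n
    rw [← coe_zeta_mul_apply]
    change ((zeta : ArithmeticFunction ℝ) * ((moebius : ArithmeticFunction ℝ) * f)) n = f n
    rw [← mul_assoc, coe_zeta_mul_coe_moebius, one_mul]
  refine ⟨ψ, fun n => ?_, fun n hn => by rw [hsum, hfn n hn]⟩
  rcases Nat.eq_zero_or_pos n with rfl | hn
  · simp
  rw [hψ.multiplicative_factorization ψ hn.ne']
  refine Finset.prod_nonneg fun p hp => ?_
  have hpp : p.Prime := Nat.prime_of_mem_primeFactors hp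
  obtain ⟨k, hk⟩ : ∃ k, n.factorization p = k := ⟨_, rfl⟩
  rw [hk]
  rcases k with _ | k
  · simp [hψ.1]
  · have h1 := hsum (p ^ (k + 1))
    have h2 := hsum (p ^ k)
    rw [Nat.sum_divisors_prime_pow hpp] at h1 h2
    rw [Finset.sum_range_succ, h2] at h1
    have h3 : ψ (p ^ (k + 1)) = f (p ^ (k + 1)) - f (p ^ k) := by linarith
    change 0 ≤ ψ (p ^ (k + 1))
    rw [h3, hfn _ (pow_pos hpp.pos _), hfn _ (pow_pos hpp.pos _), sub_nonneg]
    refine Real.rpow_le_rpow (by positivity) ?_ hu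
    exact_mod_cast Nat.pow_le_pow_right hpp.pos (Nat.le_succ k)

/-- The probability of a set of multiples under the zeta distribution of parameter `t` decreases
with `t`: with `s = t + u` and `ψ` as in `exists_jordan`,
`n^{-t} = ∑_{d e = n} d^{-s} · ψ(e) e^{-s}` is a convolution with nonnegative weights. -/
lemma zsum_multiples_mono {M : Set ℤ} (hM : ∀ a b : ℤ, a ∈ M → a * b ∈ M) {t s : ℝ} (ht : 1 < t)
    (hts : t ≤ s) : zsum M s * zsum Set.univ t ≤ zsum M t * zsum Set.univ s := by
  obtain ⟨ψ, hψ0, hψ⟩ := exists_jordan (u := s - t) (by linarith)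
  have hs : 1 < s := by linarith
  have hs0 : s ≠ 0 := by linarith
  have hψle : ∀ n : ℕ, 0 < n → ψ n ≤ (n : ℝ) ^ (s - t) := by
    intro n hn
    rw [← hψ n hn]
    exact Finset.single_le_sum (f := ψ) (fun d _ => hψ0 d) (Nat.mem_divisors_self n hn.ne')
  have hpow : ∀ n : ℕ, 0 < n → (n : ℝ) ^ (s - t) * (n : ℝ) ^ (-s) = (n : ℝ) ^ (-t) := by
    intro n hn
    rw [← Real.rpow_add (by exact_mod_cast hn)]; congr 1; ring
  have hz : (0 : ℝ) ^ (-s) = 0 := Real.zero_rpow (neg_ne_zero.2 hs0)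
  have hψsum : Summable fun n : ℕ => ψ n * (n : ℝ) ^ (-s) := by
    refine Summable.of_nonneg_of_le (fun n => mul_nonneg (hψ0 n) (by positivity)) (fun n => ?_)
      (Real.summable_nat_rpow.2 (by linarith : -t < -1))
    rcases Nat.eq_zero_or_pos n with rfl | hn
    · simp only [Nat.cast_zero, hz, mul_zero]; positivity
    · rw [← hpow n hn]
      exact mul_le_mul_of_nonneg_right (hψle n hn) (by positivity)
  -- the product of the two series is the series of the divisor convolution
  have hprod : ∀ E : Set ℤ, zsum E s * rL ψ s =
      rL (fun n => ∑ p ∈ n.divisorsAntidiagonal, (if ((p.1 : ℕ) : ℤ) ∈ E then 1 else 0) * ψ p.2) s := by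
    intro E
    have h1 := LSeries_convolution' (LSeriesSummable_ofReal _ hs0 (zsum_summable E hs))
      (LSeriesSummable_ofReal ψ hs0 hψsum)
    rw [LSeries_ofReal _ hs0, LSeries_ofReal _ hs0, LSeries.convolution_def] at h1
    have h2 : (fun n : ℕ => ∑ p ∈ n.divisorsAntidiagonal,
        (((if ((p.1 : ℕ) : ℤ) ∈ E then (1 : ℝ) else 0 : ℝ) : ℂ)) * (ψ p.2 : ℂ)) =
        fun n => ((∑ p ∈ n.divisorsAntidiagonal,
          (if ((p.1 : ℕ) : ℤ) ∈ E then (1 : ℝ) else 0) * ψ p.2 : ℝ) : ℂ) := by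
      funext n; push_cast; rfl
    rw [h2, LSeries_ofReal _ hs0] at h1
    unfold zsum
    rw [← Complex.ofReal_mul] at h1
    exact (Complex.ofReal_injective h1).symm
  have hcount : ∀ E : Set ℤ, (∀ a b : ℤ, a ∈ E → a * b ∈ E) → ∀ n : ℕ,
      (∑ p ∈ n.divisorsAntidiagonal, (if ((p.1 : ℕ) : ℤ) ∈ E then 1 else 0) * ψ p.2) *
        (n : ℝ) ^ (-s) ≤ (if (n : ℤ) ∈ E then 1 else 0) * (n : ℝ) ^ (-t) := by
    intro E hE n
    rcases Nat.eq_zero_or_pos n with rfl | hn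
    · simp [hz]; split_ifs <;> positivity
    have h1 : (∑ p ∈ n.divisorsAntidiagonal, (if ((p.1 : ℕ) : ℤ) ∈ E then 1 else 0) * ψ p.2) ≤
        (if (n : ℤ) ∈ E then 1 else 0) * (n : ℝ) ^ (s - t) := by
      rw [← hψ n hn, ← Nat.sum_divisorsAntidiagonal' (f := fun _ d => ψ d), Finset.mul_sum]
      refine Finset.sum_le_sum fun p hp => mul_le_mul_of_nonneg_right ?_ (hψ0 _)
      have hpn : ((p.1 : ℕ) : ℤ) * (p.2 : ℤ) = n := by
        exact_mod_cast (Nat.mem_divisorsAntidiagonal.1 hp).1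
      by_cases h : ((p.1 : ℕ) : ℤ) ∈ E
      · have := hE _ (p.2 : ℤ) h
        rw [hpn] at this
        simp [h, this]
      · simp only [h, if_false]; split_ifs <;> simp
    calc _ ≤ (if (n : ℤ) ∈ E then 1 else 0) * (n : ℝ) ^ (s - t) * (n : ℝ) ^ (-s) :=
          mul_le_mul_of_nonneg_right h1 (by positivity)
      _ = _ := by rw [mul_assoc, hpow n hn]
  have hle : zsum M s * rL ψ s ≤ zsum M t := by
    rw [hprod M]
    refine Summable.tsum_le_tsum (hcount M hM) ?_ (zsum_summable M ht)
    refine Summable.of_nonneg_of_le (fun n => ?_) (hcount M hM) (zsum_summable M ht)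
    exact mul_nonneg (Finset.sum_nonneg fun p _ => mul_nonneg (by split_ifs <;> simp) (hψ0 _))
      (by positivity)
  have heq : zsum Set.univ s * rL ψ s = zsum Set.univ t := by
    rw [hprod Set.univ]
    unfold zsum rL
    refine tsum_congr fun n => ?_
    rcases Nat.eq_zero_or_pos n with rfl | hn
    · simp [hz, Real.zero_rpow (by linarith : -t ≠ 0)]
    simp only [Set.mem_univ, if_true, one_mul]
    rw [Nat.sum_divisorsAntidiagonal' (f := fun _ d => ψ d), hψ n hn, hpow n hn]
  rw [← heq]
  calc zsum M s * (zsum Set.univ s * rL ψ s) = zsum M s * rL ψ s * zsum Set.univ s := by ring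
    _ ≤ zsum M t * zsum Set.univ s :=
        mul_le_mul_of_nonneg_right hle (zsum_nonneg _ _)

/-! ### Sets of multiples: finite approximation and equidistribution in coprime classes -/

lemma MB_mul (B : Set ℕ) (a b : ℤ) (h : a ∈ MB B) : a * b ∈ MB B := by
  obtain ⟨c, hc, hd⟩ := h
  exact ⟨c, hc, hd.mul_right b⟩

lemma MB_mono {B C : Set ℕ} (h : B ⊆ C) : MB B ⊆ MB C := by
  rintro n ⟨b, hb, hd⟩
  exact ⟨b, h hb, hd⟩

lemma PerSet_MB {B : Set ℕ} {L : ℕ} (h : ∀ b ∈ B, b ∣ L) : PerSet (MB B) L := by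
  intro i
  constructor
  · rintro ⟨b, hb, hd⟩
    exact ⟨b, hb, hd.add (Int.natCast_dvd_natCast.2 (h b hb))⟩
  · rintro ⟨b, hb, hd⟩
    exact ⟨b, hb, (Int.dvd_add_left (Int.natCast_dvd_natCast.2 (h b hb))).1 hd⟩

/-- For fixed `t`, finite subsets of `C` exhaust the zeta weight of `MB C`. -/
lemma zsum_MB_approx (C : Set ℕ) {t : ℝ} (ht : 1 < t) {ε : ℝ} (hε : 0 < ε) :
    ∃ K : Finset ℕ, (K : Set ℕ) ⊆ C ∧ zsum (MB C) t ≤ zsum (MB (K : Set ℕ)) t + ε := by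
  have h1 := (zsum_summable (MB C) ht).hasSum
  have h2 : zsum (MB C) t - ε < zsum (MB C) t := by linarith
  obtain ⟨F, hF⟩ := (h1.eventually (lt_mem_nhds h2)).exists
  have hc : ∀ n : ℕ, ∃ c : ℕ, (n : ℤ) ∈ MB C → c ∈ C ∧ (c : ℤ) ∣ n := by
    intro n
    by_cases h : (n : ℤ) ∈ MB C
    · obtain ⟨c, hc, hd⟩ := h
      exact ⟨c, fun _ => ⟨hc, hd⟩⟩
    · exact ⟨0, fun h' => absurd h' h⟩
  choose c hc using hc
  refine ⟨(F.filter fun n : ℕ => (n : ℤ) ∈ MB C).image c, ?_, ?_⟩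
  · intro x hx
    simp only [Finset.coe_image, Set.mem_image, Finset.mem_coe, Finset.mem_filter] at hx
    obtain ⟨n, ⟨-, hn⟩, rfl⟩ := hx
    exact (hc n hn).1
  · set K := (F.filter fun n : ℕ => (n : ℤ) ∈ MB C).image c with hK
    have h3 : ∑ n ∈ F, (if (n : ℤ) ∈ MB C then (1 : ℝ) else 0) * (n : ℝ) ^ (-t) ≤
        ∑ n ∈ F, (if (n : ℤ) ∈ MB (K : Set ℕ) then (1 : ℝ) else 0) * (n : ℝ) ^ (-t) := by
      refine Finset.sum_le_sum fun n hn => mul_le_mul_of_nonneg_right ?_ (by positivity)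
      by_cases h : (n : ℤ) ∈ MB C
      · have : (n : ℤ) ∈ MB (K : Set ℕ) :=
          ⟨c n, Finset.mem_coe.2 (Finset.mem_image.2 ⟨n, by simp [hn, h], rfl⟩), (hc n h).2⟩
        simp [h, this]
      · simp only [h, if_false]; split_ifs <;> simp
    have h4 := (zsum_summable (MB (K : Set ℕ)) ht).sum_le_tsum F
      (fun n _ => mul_nonneg (by split_ifs <;> simp) (by positivity))
    have h5 : zsum (MB (K : Set ℕ)) t =
      ∑' n : ℕ, (if (n : ℤ) ∈ MB (K : Set ℕ) then (1 : ℝ) else 0) * (n : ℝ) ^ (-t) := rfl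
    linarith

/-- For finite `K` the zeta proportion of `MB K` at every `t > 1` is at most its limit at `t = 1`,
which is the density of `MB K`. -/
lemma zsum_MB_le_of_finite {K : Finset ℕ} (hK0 : 0 ∉ K) {θ : ℝ}
    (hθ : θ * (∏ b ∈ K, b : ℕ) ≤ wcount (FB (K : Set ℕ)) 0 (∏ b ∈ K, b)) {t : ℝ} (ht : 1 < t) :
    zsum (MB (K : Set ℕ)) t ≤ (1 - θ) * zsum Set.univ t := by
  set L : ℕ := ∏ b ∈ K, b with hL
  have hLpos : 0 < L :=
    Finset.prod_pos fun b hb => Nat.pos_of_ne_zero fun h => hK0 (h ▸ hb)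
  have hL' : (0 : ℝ) < L := by exact_mod_cast hLpos
  have hper : PerSet (MB (K : Set ℕ)) L :=
    PerSet_MB fun b hb => Finset.dvd_prod_of_mem _ (Finset.mem_coe.1 hb)
  have hlim := zsum_tendsto hper hLpos
  have hle : (wcount (MB (K : Set ℕ)) 0 L : ℝ) / L ≤ 1 - θ := by
    rw [div_le_iff₀ hL']
    have h1 : (wcount (MB (K : Set ℕ)) 0 L : ℝ) + wcount (FB (K : Set ℕ)) 0 L = L := by
      exact_mod_cast wcount_compl (MB (K : Set ℕ)) 0 L
    linarith
  have h1 := hlim.mul_const (zsum Set.univ t)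
  have h2 := zsum_univ_tendsto.const_mul (zsum (MB (K : Set ℕ)) t)
  have h3 := le_of_tendsto_of_tendsto h2 h1 (by
    have hev : ∀ᶠ u : ℝ in 𝓝[>] 1, u < t := nhdsWithin_le_nhds (gt_mem_nhds ht)
    filter_upwards [self_mem_nhdsWithin, hev] with u hu hut
    have hu1 : (1 : ℝ) < u := hu
    have := zsum_multiples_mono (MB_mul (K : Set ℕ)) hu1 hut.le
    have h4 : 0 ≤ u - 1 := by linarith
    nlinarith [mul_le_mul_of_nonneg_left this h4])
  rw [mul_one] at h3
  exact h3.trans (mul_le_mul_of_nonneg_right hle (zsum_nonneg _ _))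

/-- The residue class of `r` modulo `Q`. -/
def cls (r : ℤ) (Q : ℕ) : Set ℤ := {z | (Q : ℤ) ∣ z - r}

lemma PerSet_cls (r : ℤ) (Q : ℕ) : PerSet (cls r Q) Q := by
  intro i
  simp only [cls, Set.mem_ofPred_eq]
  rw [add_sub_right_comm, Int.dvd_add_left (dvd_refl _)]

lemma PerSet.inter {E F : Set ℤ} {Q : ℕ} (hE : PerSet E Q) (hF : PerSet F Q) :
    PerSet (E ∩ F) Q := fun i => and_congr (hE i) (hF i)

lemma sum_cls (Q : ℕ) (hQ : 0 < Q) (z : ℤ) (c : ℕ) :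
    ∑ r ∈ Finset.range Q, (if z ∈ cls (r : ℤ) Q then c else 0) = c := by
  have hQ' : (0 : ℤ) < Q := by exact_mod_cast hQ
  have hr : ((z % Q).toNat : ℤ) = z % Q := Int.toNat_of_nonneg (Int.emod_nonneg _ hQ'.ne')
  rw [Finset.sum_eq_single (z % Q).toNat]
  · rw [if_pos]
    simp only [cls, Set.mem_ofPred_eq, hr]
    exact Int.dvd_self_sub_emod
  · intro r hrQ hne
    rw [if_neg]
    intro h
    have h1 : z % Q = (r : ℤ) % Q :=
      Int.emod_eq_emod_iff_emod_sub_eq_zero.2 (Int.emod_eq_zero_of_dvd h)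
    have h2 : (r : ℤ) % Q = r :=
      Int.emod_eq_of_lt (Int.natCast_nonneg r) (by exact_mod_cast Finset.mem_range.1 hrQ)
    apply hne
    omega
  · intro h
    exfalso; apply h
    rw [Finset.mem_range]
    have := Int.emod_lt_of_pos z hQ'
    omega

/-- Sets of period `L` are equidistributed among the residue classes modulo `Q` when `L` and `Q`
are coprime. -/
lemma wcount_inter_cls {E : Set ℤ} {L Q : ℕ} (hE : PerSet E L) (hQ : 0 < Q)
    (hco : Nat.Coprime L Q) (r : ℤ) :
    Q * wcount (E ∩ cls r Q) 0 (Q * L) = wcount E 0 (Q * L) := by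
  have hper : ∀ r, PerSet (E ∩ cls r Q) (Q * L) := fun r =>
    (hE.of_dvd (Nat.dvd_mul_left L Q)).inter ((PerSet_cls r Q).of_dvd (Nat.dvd_mul_right Q L))
  have hshift : ∀ (r k : ℤ), wcount (E ∩ cls (r + L * k) Q) 0 (Q * L) =
      wcount (E ∩ cls r Q) 0 (Q * L) := by
    intro r k
    rw [← wcount_period (hper (r + L * k)) (L * k)]
    unfold wcount
    refine Finset.sum_congr rfl fun i _ => ?_
    have h1 : (L : ℤ) * k + i ∈ E ↔ 0 + (i : ℤ) ∈ E := by
      rw [hE.mul (0 + i) k]; ring_nf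
    have h2 : (L : ℤ) * k + i ∈ cls (r + L * k) Q ↔ 0 + (i : ℤ) ∈ cls r Q := by
      simp only [cls, Set.mem_ofPred_eq]; ring_nf
    simp only [Set.mem_inter_iff, h1, h2]
  have hconst : ∀ r s : ℤ, wcount (E ∩ cls r Q) 0 (Q * L) = wcount (E ∩ cls s Q) 0 (Q * L) := by
    intro r s
    obtain ⟨u, v, huv⟩ : IsCoprime (L : ℤ) (Q : ℤ) := Nat.isCoprime_iff_coprime.2 hco
    have h1 := hshift r (u * (s - r))
    have h2 : cls (r + L * (u * (s - r))) Q = cls s Q := by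
      ext z
      simp only [cls, Set.mem_ofPred_eq]
      have : z - (r + L * (u * (s - r))) = z - s + Q * (v * (s - r)) := by
        linear_combination (r - s) * huv
      rw [this, Int.dvd_add_left (dvd_mul_right _ _)]
    rw [← h1, h2]
  calc Q * wcount (E ∩ cls r Q) 0 (Q * L)
      = ∑ s ∈ Finset.range Q, wcount (E ∩ cls (s : ℤ) Q) 0 (Q * L) := by
        rw [Finset.sum_congr rfl (fun (s : ℕ) _ => hconst (s : ℤ) r)]; simp
    _ = wcount E 0 (Q * L) := by
        unfold wcount
        rw [Finset.sum_comm]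
        refine Finset.sum_congr rfl fun i _ => ?_
        rw [← sum_cls Q hQ (0 + (i : ℤ)) (if 0 + (i : ℤ) ∈ E then 1 else 0)]
        refine Finset.sum_congr rfl fun s _ => ?_
        by_cases h1 : 0 + (i : ℤ) ∈ E <;> by_cases h2 : 0 + (i : ℤ) ∈ cls (s : ℤ) Q <;>
          simp only [Set.mem_inter_iff, h1, h2, and_self, and_true, and_false, if_true, if_false]

/-! ### Translates meeting the free numbers in a large proportion -/

/-- If the zeta weight of `MB C` never exceeds the proportion `δ`, then `MB C` fills at most a
proportion `δ` of every residue class coprime to the modulus. By monotonicity in `t`, a finite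
`K ⊆ C` approximates `MB C` in zeta weight uniformly for `t` near `1`; elements of `C` that are not
coprime to `Q` have no multiples in the class, and for the others equidistribution applies. -/
lemma zsum_inter_cls_le {C : Set ℕ} (hC0 : 0 ∉ C) {δ : ℝ}
    (hδ : ∀ t : ℝ, 1 < t → zsum (MB C) t ≤ δ * zsum Set.univ t) {Q : ℕ} (hQ : 0 < Q) {r : ℤ}
    (hr : IsCoprime r (Q : ℤ)) {ε : ℝ} (hε : 0 < ε) :
    ∀ᶠ t in 𝓝[>] (1 : ℝ), (t - 1) * zsum (MB C ∩ cls r Q) t ≤ δ / Q + ε := by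
  have hQ' : (0 : ℝ) < Q := by exact_mod_cast hQ
  set C' : Set ℕ := {c | c ∈ C ∧ c.Coprime Q} with hC'
  have hsub : MB C ∩ cls r Q ⊆ MB C' ∩ cls r Q := by
    rintro z ⟨⟨c, hc, hcz⟩, hz⟩
    refine ⟨⟨c, ⟨hc, ?_⟩, hcz⟩, hz⟩
    have h1 : IsCoprime z (Q : ℤ) := by
      obtain ⟨k, hk⟩ := hz
      have : z = r + Q * k := by linarith
      rw [this]
      exact hr.add_mul_left_left k
    exact Nat.isCoprime_iff_coprime.1 (h1.of_isCoprime_of_dvd_left hcz)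
  -- the supremum of the proportion of `MB C'` is almost attained by a finite subset of `C'`
  set f : ℝ → ℝ := fun t => zsum (MB C') t / zsum Set.univ t with hf
  have hfle : ∀ t, 1 < t → f t ≤ δ := fun t ht => by
    rw [hf]; dsimp only
    rw [div_le_iff₀ (zsum_univ_pos ht)]
    exact (zsum_mono (MB_mono fun c hc => hc.1) ht).trans (hδ t ht)
  have hbdd : BddAbove (f '' Set.Ioi 1) := ⟨δ, by rintro _ ⟨t, ht, rfl⟩; exact hfle t ht⟩
  obtain ⟨_, ⟨t₀, ht₀, rfl⟩, hlt⟩ := exists_lt_of_lt_csSup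
    (s := f '' Set.Ioi 1) ⟨f 2, ⟨2, by simp, rfl⟩⟩
    (show sSup (f '' Set.Ioi 1) - ε / 4 < sSup (f '' Set.Ioi 1) by linarith)
  set δ' := sSup (f '' Set.Ioi 1) with hδ'
  have ht₀' : (1 : ℝ) < t₀ := ht₀
  have hz0 := zsum_univ_pos ht₀'
  obtain ⟨K, hKC, hK⟩ := zsum_MB_approx C' ht₀' (ε := ε / 4 * zsum Set.univ t₀) (by positivity)
  have hK1 : (δ' - ε / 2) * zsum Set.univ t₀ ≤ zsum (MB (K : Set ℕ)) t₀ := by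
    have : (δ' - ε / 4) * zsum Set.univ t₀ ≤ zsum (MB C') t₀ := by
      rw [← le_div_iff₀ hz0]; exact hlt.le
    linarith
  have hKsub : MB (K : Set ℕ) ⊆ MB C' := MB_mono hKC
  set L : ℕ := ∏ b ∈ K, b with hL
  have hLpos : 0 < L := Finset.prod_pos fun b hb => Nat.pos_of_ne_zero fun h =>
    hC0 (h ▸ (hKC (Finset.mem_coe.2 hb)).1)
  have hLco : Nat.Coprime L Q := Nat.Coprime.prod_left fun b hb => (hKC (Finset.mem_coe.2 hb)).2
  have hper : PerSet (MB (K : Set ℕ)) L :=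
    PerSet_MB fun b hb => Finset.dvd_prod_of_mem _ (Finset.mem_coe.1 hb)
  have hQL : 0 < Q * L := Nat.mul_pos hQ hLpos
  have hperQ : PerSet (MB (K : Set ℕ)) (Q * L) := hper.of_dvd (Nat.dvd_mul_left L Q)
  have hlim1 := zsum_tendsto (hperQ.inter ((PerSet_cls r Q).of_dvd (Nat.dvd_mul_right Q L))) hQL
  have hlim2 := zsum_tendsto hperQ hQL
  have hdens : (wcount (MB (K : Set ℕ)) 0 (Q * L) : ℝ) / (Q * L : ℕ) ≤ δ := by
    have h1 := zsum_univ_tendsto.const_mul δ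
    rw [mul_one] at h1
    refine le_of_tendsto_of_tendsto hlim2 h1 ?_
    filter_upwards [self_mem_nhdsWithin] with t ht
    have ht1 : (1 : ℝ) < t := ht
    have h2 := (zsum_mono (hKsub.trans (MB_mono fun c hc => hc.1)) ht1).trans (hδ t ht1)
    nlinarith [mul_le_mul_of_nonneg_left h2 (by linarith : 0 ≤ t - 1)]
  have hval : (wcount (MB (K : Set ℕ) ∩ cls r Q) 0 (Q * L) : ℝ) / (Q * L : ℕ) ≤ δ / Q := by
    have h1 : (Q : ℝ) * wcount (MB (K : Set ℕ) ∩ cls r Q) 0 (Q * L) =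
        wcount (MB (K : Set ℕ)) 0 (Q * L) := by
      exact_mod_cast wcount_inter_cls hper hQ hLco r
    rw [← h1] at hdens
    rw [le_div_iff₀ hQ']
    calc _ = (Q : ℝ) * wcount (MB (K : Set ℕ) ∩ cls r Q) 0 (Q * L) / (Q * L : ℕ) := by ring
      _ ≤ δ := hdens
  have hlim3 := hlim1.add (zsum_univ_tendsto.const_mul (ε / 2))
  have hev := hlim3.eventually (gt_mem_nhds
    (show _ < δ / Q + ε by linarith))
  have hev2 : ∀ᶠ u : ℝ in 𝓝[>] 1, u < t₀ := nhdsWithin_le_nhds (gt_mem_nhds ht₀')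
  filter_upwards [hev, hev2, self_mem_nhdsWithin] with t ht htt ht1
  have ht1' : (1 : ℝ) < t := ht1
  have hz := zsum_univ_pos ht1'
  have hmono := zsum_multiples_mono (MB_mul (K : Set ℕ)) ht1' htt.le
  have hlow : (δ' - ε / 2) * zsum Set.univ t ≤ zsum (MB (K : Set ℕ)) t := by
    have := mul_le_mul_of_nonneg_right hK1 hz.le
    have h3 : ((δ' - ε / 2) * zsum Set.univ t) * zsum Set.univ t₀ ≤
      zsum (MB (K : Set ℕ)) t * zsum Set.univ t₀ := by linarith
    exact le_of_mul_le_mul_right h3 hz0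
  have hup : zsum (MB C') t ≤ δ' * zsum Set.univ t := by
    rw [← div_le_iff₀ hz]
    exact le_csSup hbdd ⟨t, ht1', rfl⟩
  have hdiff := zsum_diff hKsub ht1'
  have hcov : MB C ∩ cls r Q ⊆ (MB (K : Set ℕ) ∩ cls r Q) ∪ (MB C' \ MB (K : Set ℕ)) := by
    intro z hz
    obtain ⟨h1, h2⟩ := hsub hz
    by_cases h3 : z ∈ MB (K : Set ℕ)
    · exact Or.inl ⟨h3, h2⟩
    · exact Or.inr ⟨h1, h3⟩
  have h4 := (zsum_mono hcov ht1').trans (zsum_union_le _ _ ht1')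
  have h5 : zsum (MB C ∩ cls r Q) t ≤
      zsum (MB (K : Set ℕ) ∩ cls r Q) t + ε / 2 * zsum Set.univ t := by linarith
  have h6 := mul_le_mul_of_nonneg_left h5 (by linarith : 0 ≤ t - 1)
  linarith

lemma zsum_shift_le (E : Set ℤ) (i : ℕ) {t : ℝ} (ht : 1 < t) :
    zsum E t ≤ (i + 1) + zsum {m : ℤ | m + i ∈ E} t := by
  obtain ⟨g, hg⟩ : ∃ g : ℕ → ℝ, g = fun n : ℕ =>
      (if (n : ℤ) ∈ E then (1 : ℝ) else 0) * (n : ℝ) ^ (-t) := ⟨_, rfl⟩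
  obtain ⟨g', hg'⟩ : ∃ g' : ℕ → ℝ, g' = fun n : ℕ =>
      (if (n : ℤ) ∈ {m : ℤ | m + i ∈ E} then (1 : ℝ) else 0) * (n : ℝ) ^ (-t) := ⟨_, rfl⟩
  have hs : Summable g := hg ▸ zsum_summable E ht
  have hs' : Summable g' := hg' ▸ zsum_summable {m : ℤ | m + i ∈ E} ht
  have e1 : zsum E t = ∑' n, g n := by rw [hg]; rfl
  have e2 : zsum {m : ℤ | m + i ∈ E} t = ∑' n, g' n := by rw [hg']; rfl
  have h0 : ∀ n : ℕ, (n : ℝ) ^ (-t) ≤ 1 := by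
    intro n
    rcases Nat.eq_zero_or_pos n with rfl | hn
    · rw [Nat.cast_zero, Real.zero_rpow (by linarith)]; exact zero_le_one
    · exact Real.rpow_le_one_of_one_le_of_nonpos (by exact_mod_cast hn) (by linarith)
  have hg1 : ∀ n, g n ≤ 1 := by
    intro n
    rw [hg]; dsimp only
    split_ifs
    · rw [one_mul]; exact h0 n
    · simp
  have hg0 : ∀ n, 0 ≤ g' n := by
    intro n
    rw [hg']
    exact mul_nonneg (by split_ifs <;> simp) (by positivity)
  have hle : ∀ n, g (n + (i + 1)) ≤ g' (n + 1) := by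
    intro n
    have : (((n + (i + 1) : ℕ) : ℤ) ∈ E) ↔ ((n + 1 : ℕ) : ℤ) ∈ {m : ℤ | m + i ∈ E} := by
      rw [Set.mem_ofPred_eq]; push_cast
      rw [show (n : ℤ) + (i + 1) = n + 1 + i by ring]
    rw [hg, hg']; dsimp only
    rw [if_congr this rfl rfl]
    refine mul_le_mul_of_nonneg_left ?_ (by split_ifs <;> simp)
    refine Real.rpow_le_rpow_of_nonpos (by positivity) ?_ (by linarith)
    push_cast; linarith
  have h1 := hs.sum_add_tsum_nat_add (i + 1)
  have h2 := hs'.sum_add_tsum_nat_add 1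
  have h3 : ∑ n ∈ Finset.range (i + 1), g n ≤ i + 1 := by
    calc _ ≤ ∑ n ∈ Finset.range (i + 1), (1 : ℝ) := Finset.sum_le_sum fun n _ => hg1 n
      _ = i + 1 := by simp
  have h4 := Summable.tsum_le_tsum hle ((summable_nat_add_iff (i + 1)).2 hs)
      ((summable_nat_add_iff 1).2 hs')
  have h5 : 0 ≤ ∑ n ∈ Finset.range 1, g' n := Finset.sum_nonneg fun n _ => hg0 n
  rw [e1, e2]
  linarith

lemma wcount_cls (r : ℤ) {Q : ℕ} (hQ : 0 < Q) : wcount (cls r Q) 0 Q = 1 := by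
  have h := wcount_inter_cls (E := Set.univ) (L := 1) (fun i => by simp) hQ (Nat.coprime_one_left Q) r
  have h2 := wcount_compl Set.univ 0 (Q * 1)
  have h3 : wcount (Set.univ : Set ℤ)ᶜ 0 (Q * 1) = 0 := by simp [wcount]
  rw [Set.univ_inter, mul_one] at h
  rw [mul_one] at h2 h3
  have : Q * wcount (cls r Q) 0 Q = Q * 1 := by omega
  exact Nat.eq_of_mul_eq_mul_left hQ this

/-- Averaging over a residue class: if every `r + i`, `i ∈ I`, is coprime to `Q`, then some
translate `m + I` with `m ≡ r` modulo `Q` meets the `C`-free numbers in a proportion at least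
`1 - δ`. -/
lemma exists_good_translate {C : Set ℕ} (hC0 : 0 ∉ C) {δ : ℝ}
    (hδ : ∀ t : ℝ, 1 < t → zsum (MB C) t ≤ δ * zsum Set.univ t) {Q : ℕ} (hQ : 0 < Q) {r : ℕ}
    (I : Finset ℕ) (hI : ∀ i ∈ I, (r + i).Coprime Q) :
    ∃ m : ℕ, (Q : ℤ) ∣ (m : ℤ) - r ∧
      (1 - δ) * I.card ≤ (I.filter fun i : ℕ => (m : ℤ) + i ∈ FB C).card := by
  by_contra! hcon
  set y : ℝ := (1 - δ) * I.card with hy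
  have hQ' : (0 : ℝ) < Q := by exact_mod_cast hQ
  have hy0 : 0 < y := lt_of_le_of_lt (Nat.cast_nonneg _) (hcon r (by simp))
  set x : ℝ := (⌈y⌉₊ : ℝ) - 1 with hx
  have hxy : x < y := by have := Nat.ceil_lt_add_one hy0.le; linarith
  have hcnt : ∀ m : ℕ, (Q : ℤ) ∣ (m : ℤ) - r →
      ((I.filter fun i : ℕ => (m : ℤ) + i ∈ FB C).card : ℝ) ≤ x := by
    intro m hm
    have h1 := Nat.lt_ceil.2 (hcon m hm)
    have h2 : ((I.filter fun i : ℕ => (m : ℤ) + i ∈ FB C).card : ℝ) + 1 ≤ ⌈y⌉₊ := by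
      exact_mod_cast h1
    linarith
  have hx0 : 0 ≤ x := le_trans (Nat.cast_nonneg _) (hcnt r (by simp))
  have hsum : ∀ t : ℝ, 1 < t →
      ∑ i ∈ I, zsum ({m : ℤ | m + (i : ℕ) ∈ FB C} ∩ cls r Q) t ≤ x * zsum (cls r Q) t := by
    intro t ht
    unfold zsum rL
    rw [← Summable.tsum_finsetSum fun i _ => zsum_summable _ ht, ← tsum_mul_left]
    refine Summable.tsum_le_tsum (fun n => ?_) (summable_sum fun i _ => zsum_summable _ ht)
      ((zsum_summable _ ht).mul_left x)
    rw [← Finset.sum_mul, ← mul_assoc]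
    refine mul_le_mul_of_nonneg_right ?_ (by positivity)
    by_cases hn : (n : ℤ) ∈ cls r Q
    · have := hcnt n hn
      simp only [Set.mem_inter_iff, hn, and_true, if_true, mul_one]
      rw [Finset.sum_ite]
      simpa using this
    · simp [hn]
  -- compare with the densities as `t` decreases to `1`
  have hlow : ∀ ε : ℝ, 0 < ε → ∑ i ∈ I, ((1 : ℝ) / Q - (δ / Q + ε)) ≤ x * (1 / Q) := by
    intro ε hε
    have hcl : ∀ s : ℤ, Tendsto (fun t : ℝ => (t - 1) * zsum (cls s Q) t) (𝓝[>] 1)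
        (𝓝 (1 / Q)) := by
      intro s
      have := zsum_tendsto (PerSet_cls s Q) hQ
      rwa [wcount_cls s hQ, Nat.cast_one] at this
    have ht1 : Tendsto (fun t : ℝ => t - 1) (𝓝[>] 1) (𝓝 0) := by
      have : Tendsto (fun t : ℝ => t - 1) (𝓝 1) (𝓝 (1 - 1)) := tendsto_id.sub_const 1
      rw [sub_self] at this
      exact this.mono_left nhdsWithin_le_nhds
    have hL : Tendsto (fun t : ℝ => ∑ i ∈ I, ((t - 1) * zsum (cls (r + (i : ℕ) : ℤ) Q) t -
        (δ / Q + ε) - (t - 1) * ((i : ℝ) + 1))) (𝓝[>] 1)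
        (𝓝 (∑ i ∈ I, ((1 : ℝ) / Q - (δ / Q + ε) - 0 * ((i : ℝ) + 1)))) :=
      tendsto_finsetSum _ fun i _ => (((hcl _).sub_const _).sub (ht1.mul_const _))
    have hR := (hcl r).const_mul x
    have := le_of_tendsto_of_tendsto hL hR ?_
    · simpa using this
    have hev : ∀ᶠ t in 𝓝[>] (1 : ℝ), ∀ i ∈ I,
        (t - 1) * zsum (MB C ∩ cls (r + (i : ℕ) : ℤ) Q) t ≤ δ / Q + ε := by
      rw [Finset.eventually_all]
      intro i hi
      refine zsum_inter_cls_le hC0 hδ hQ ?_ hε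
      have := Nat.isCoprime_iff_coprime.2 (hI i hi)
      exact_mod_cast this
    filter_upwards [hev, self_mem_nhdsWithin] with t ht ht1
    have ht1' : (1 : ℝ) < t := ht1
    have hpos : 0 ≤ t - 1 := by linarith
    calc _ ≤ ∑ i ∈ I, (t - 1) * zsum ({m : ℤ | m + (i : ℕ) ∈ FB C} ∩ cls r Q) t := by
          refine Finset.sum_le_sum fun i hi => ?_
          have h1 := zsum_shift_le (FB C ∩ cls (r + (i : ℕ) : ℤ) Q) i ht1'
          have h2 : {m : ℤ | m + (i : ℕ) ∈ FB C ∩ cls (r + (i : ℕ) : ℤ) Q} =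
              {m : ℤ | m + (i : ℕ) ∈ FB C} ∩ cls r Q := by
            ext m
            simp [cls]
          rw [h2] at h1
          have h3 : zsum (cls (r + (i : ℕ) : ℤ) Q) t ≤
              zsum (FB C ∩ cls (r + (i : ℕ) : ℤ) Q) t + zsum (MB C ∩ cls (r + (i : ℕ) : ℤ) Q) t := by
            refine le_trans (zsum_mono ?_ ht1') (zsum_union_le _ _ ht1')
            intro z hz
            by_cases hzm : z ∈ MB C
            · exact Or.inr ⟨hzm, hz⟩
            · exact Or.inl ⟨hzm, hz⟩
          have h4 := ht i hi
          have h5 := mul_le_mul_of_nonneg_left h1 hpos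
          have h6 := mul_le_mul_of_nonneg_left h3 hpos
          linarith
      _ = (t - 1) * ∑ i ∈ I, zsum ({m : ℤ | m + (i : ℕ) ∈ FB C} ∩ cls r Q) t := by
          rw [Finset.mul_sum]
      _ ≤ (t - 1) * (x * zsum (cls r Q) t) := mul_le_mul_of_nonneg_left (hsum t ht1') hpos
      _ = _ := by ring
  have hfin : ∀ ε : ℝ, 0 < ε → y ≤ x + ε := by
    intro ε hε
    have h1 := hlow (ε / (Q * (I.card + 1))) (by positivity)
    rw [Finset.sum_const, nsmul_eq_mul] at h1
    have hc : (0 : ℝ) < I.card + 1 := by positivity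
    have h2 := mul_le_mul_of_nonneg_right h1 hQ'.le
    have h3 : (I.card : ℝ) * (1 / Q - (δ / Q + ε / (Q * (I.card + 1)))) * Q =
        y - ε * (I.card / (I.card + 1)) := by rw [hy]; field_simp; ring
    have h4 : x * (1 / (Q : ℝ)) * Q = x := by field_simp
    have h5 : (I.card : ℝ) / (I.card + 1) ≤ 1 := by rw [div_le_one hc]; linarith
    nlinarith
  have := hfin ((y - x) / 2) (by linarith)
  linarith

/-- The hypothesis on the weights of `MB C` follows from lower bounds on the densities of the
`K`-free numbers for finite `K ⊆ C`. -/
lemma zsum_MB_le {C : Set ℕ} (hC0 : 0 ∉ C) {θ : ℝ}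
    (hθ : ∀ K : Finset ℕ, (K : Set ℕ) ⊆ C →
      θ * (∏ b ∈ K, b : ℕ) ≤ wcount (FB (K : Set ℕ)) 0 (∏ b ∈ K, b)) {t : ℝ} (ht : 1 < t) :
    zsum (MB C) t ≤ (1 - θ) * zsum Set.univ t := by
  refine le_of_forall_pos_le_add fun ε hε => ?_
  obtain ⟨K, hK, h⟩ := zsum_MB_approx C ht hε
  have := zsum_MB_le_of_finite (fun h0 => hC0 (hK (Finset.mem_coe.2 h0))) (hθ K hK) ht
  linarith

/-! ### Zero entropy makes `ZB B` sparse -/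

lemma pCount_le (X : Set (ℤ → Bool)) (n : ℕ) : pCount X n ≤ 2 ^ n := by
  have h := Set.ncard_le_ncard (Set.subset_univ (blocks X n)) Set.finite_univ
  rw [Set.ncard_univ, Nat.card_eq_fintype_card] at h
  simpa [pCount] using h

lemma logb_nat_nonneg (p : ℕ) : 0 ≤ Real.logb 2 p := by
  rcases Nat.eq_zero_or_pos p with rfl | hp
  · simp
  · exact Real.logb_nonneg one_lt_two (by exact_mod_cast hp)

lemma logb_pCount_le (X : Set (ℤ → Bool)) (n : ℕ) : Real.logb 2 (pCount X n) ≤ n := by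
  rcases Nat.eq_zero_or_pos (pCount X n) with h | h
  · rw [h]; simp
  · have h1 : (pCount X n : ℝ) ≤ (2 : ℝ) ^ (n : ℝ) := by
      rw [Real.rpow_natCast]; exact_mod_cast pCount_le X n
    rwa [Real.logb_le_iff_le_rpow one_lt_two (by exact_mod_cast h)]

lemma eventually_of_topEnt {X : Set (ℤ → Bool)} (h : topEnt X = 0) {ε : ℝ} (hε : 0 < ε) :
    ∀ᶠ n : ℕ in atTop, Real.logb 2 (pCount X n) / n < ε := by
  refine eventually_lt_of_limsup_lt (by rw [← topEnt, h]; exact hε) ?_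
  refine isBoundedUnder_of ⟨1, fun n => ?_⟩
  exact div_le_one_of_le₀ (logb_pCount_le X n) (Nat.cast_nonneg n)

lemma eta_eq_true {B : Set ℕ} {n : ℤ} : eta B n = true ↔ n ∈ FB B := by
  unfold eta; split_ifs <;> simp_all

lemma self_mem_orbitClosure (x : ℤ → Bool) (k : ℤ) :
    (fun n => x (n + k)) ∈ orbitClosure x := subset_closure ⟨k, rfl⟩

/-- The set of quotients `b / gcd(b, d)`: a multiple `d k` is `B`-free exactly when `k` is free
with respect to this set. -/
def divSet (B : Set ℕ) (d : ℕ) : Set ℕ := {c | ∃ b ∈ B, c = b / b.gcd d}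

lemma mem_MB_divSet {B : Set ℕ} {d : ℕ} (hd : 0 < d) (k : ℤ) :
    (d : ℤ) * k ∈ MB B ↔ k ∈ MB (divSet B d) := by
  have key : ∀ b : ℕ, (b : ℤ) ∣ d * k ↔ ((b / b.gcd d : ℕ) : ℤ) ∣ k := by
    intro b
    have hg : 0 < b.gcd d := Nat.gcd_pos_of_pos_right b hd
    rw [Int.natCast_dvd, Int.natCast_dvd, Int.natAbs_mul, Int.natAbs_natCast]
    have hco := Nat.coprime_div_gcd_div_gcd hg
    obtain ⟨b', hb'⟩ := Nat.gcd_dvd_left b d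
    obtain ⟨d', hd'⟩ := Nat.gcd_dvd_right b d
    have h1 : b / b.gcd d = b' := Nat.div_eq_of_eq_mul_right hg hb'
    have h2 : d / b.gcd d = d' := Nat.div_eq_of_eq_mul_right hg hd'
    rw [h1, h2] at hco
    rw [h1]
    calc b ∣ d * k.natAbs ↔ b.gcd d * b' ∣ b.gcd d * (d' * k.natAbs) := by
          rw [← hb', ← mul_assoc, ← hd']
      _ ↔ b' ∣ d' * k.natAbs := Nat.mul_dvd_mul_iff_left hg
      _ ↔ b' ∣ k.natAbs := hco.dvd_mul_left
  constructor
  · rintro ⟨b, hb, h⟩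
    exact ⟨_, ⟨b, hb, rfl⟩, (key b).1 h⟩
  · rintro ⟨_, ⟨b, hb, rfl⟩, h⟩
    exact ⟨b, hb, (key b).2 h⟩

lemma zero_notMem_divSet {B : Set ℕ} (hB : 0 ∉ B) {d : ℕ} : 0 ∉ divSet B d := by
  rintro ⟨b, hb, h⟩
  have hb0 : 0 < b := Nat.pos_of_ne_zero fun h => hB (h ▸ hb)
  have := Nat.div_pos (Nat.gcd_le_left d hb0) (Nat.gcd_pos_of_pos_left d hb0)
  omega

lemma exists_mem_divSet {B : Set ℕ} {d : ℕ} (hd0 : 0 < d) (hd : d ∈ Dset B) (P : ℕ) (hP : 0 < P) :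
    ∃ a, 2 ≤ a ∧ a.Coprime P ∧ a ∈ divSet B d := by
  obtain ⟨a, h2, hco, h⟩ := Dset_exists hd hP
  refine ⟨a, h2, hco, d * a, h, ?_⟩
  rw [Nat.gcd_eq_right (Nat.dvd_mul_right d a), Nat.mul_div_cancel_left a hd0]

/-- Any set `S` of positions can be covered by multiples of elements of `C` while a proportion
`θ` of the remaining positions stays `C`-free. -/
lemma exists_pattern {C : Set ℕ} (hC0 : 0 ∉ C)
    (hC : ∀ P : ℕ, 0 < P → ∃ a, 2 ≤ a ∧ a.Coprime P ∧ a ∈ C) {θ : ℝ}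
    (hθ : ∀ K : Finset ℕ, (K : Set ℕ) ⊆ C →
      θ * (∏ b ∈ K, b : ℕ) ≤ wcount (FB (K : Set ℕ)) 0 (∏ b ∈ K, b)) (n : ℕ) (S : Finset ℕ)
    (hS : S ⊆ Finset.range n) :
    ∃ m : ℕ, (∀ j ∈ S, (m : ℤ) + (j : ℕ) ∈ MB C) ∧
      θ * ((n : ℝ) - S.card) ≤
        ((Finset.range n).filter fun i : ℕ => (m : ℤ) + i ∈ FB C).card := by
  obtain ⟨Q, r, hQ, hcov, hco⟩ := exists_class_remove hC n S hS
  obtain ⟨m, hm, hcard⟩ := exists_good_translate hC0 (δ := 1 - θ)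
    (fun t ht => zsum_MB_le hC0 hθ ht) hQ (r := r) (Finset.range n \ S)
    (fun i hi => hco i (Finset.mem_range.1 (Finset.mem_sdiff.1 hi).1) (Finset.mem_sdiff.1 hi).2)
  refine ⟨m, fun j hj => ?_, ?_⟩
  · obtain ⟨a, haC, haQ, har⟩ := hcov j hj
    refine ⟨a, haC, ?_⟩
    have h1 : (a : ℤ) ∣ (m : ℤ) - r := (Int.natCast_dvd_natCast.2 haQ).trans hm
    have h2 : (a : ℤ) ∣ (r : ℤ) + j := by exact_mod_cast Int.natCast_dvd_natCast.2 har
    have : (m : ℤ) + j = (m - r) + (r + j) := by ring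
    rw [this]
    exact h1.add h2
  · have h1 : ((Finset.range n \ S).card : ℝ) = n - S.card := by
      rw [Finset.card_sdiff_of_subset hS, Finset.card_range,
        Nat.cast_sub (by simpa using Finset.card_le_card hS)]
    rw [h1, sub_sub_cancel] at hcard
    refine hcard.trans ?_
    exact_mod_cast Finset.card_le_card (Finset.filter_subset_filter _ Finset.sdiff_subset)

/-- There are at least `2 ^ (θ n / 2 - 1)` patterns of length `n`: a pattern with at least
`θ n / 2` free positions is disjoint from at most `2 ^ (n - θ n / 2)` sets `S`, and half of all
sets `S` have at most `n / 2` elements. -/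
lemma pow_le_patterns {C : Set ℕ} (hC0 : 0 ∉ C)
    (hC : ∀ P : ℕ, 0 < P → ∃ a, 2 ≤ a ∧ a.Coprime P ∧ a ∈ C) {θ : ℝ} (hθ0 : 0 ≤ θ)
    (hθ : ∀ K : Finset ℕ, (K : Set ℕ) ⊆ C →
      θ * (∏ b ∈ K, b : ℕ) ≤ wcount (FB (K : Set ℕ)) 0 (∏ b ∈ K, b)) (n : ℕ) :
    ∃ W : Finset (Finset ℕ), 2 ^ ⌈θ * n / 2⌉₊ ≤ 2 * W.card ∧ ∀ p ∈ W, ∃ m : ℕ,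
      p = (Finset.range n).filter fun i : ℕ => (m : ℤ) + i ∈ FB C := by
  have hex : ∀ S : Finset ℕ, ∃ m : ℕ, S ⊆ Finset.range n →
      (∀ j ∈ S, (m : ℤ) + (j : ℕ) ∈ MB C) ∧ θ * ((n : ℝ) - S.card) ≤
        ((Finset.range n).filter fun i : ℕ => (m : ℤ) + i ∈ FB C).card := by
    intro S
    by_cases hS : S ⊆ Finset.range n
    · obtain ⟨m, hm⟩ := exists_pattern hC0 hC hθ n S hS
      exact ⟨m, fun _ => hm⟩
    · exact ⟨0, fun h => absurd h hS⟩
  choose m hm using hex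
  set φ : Finset ℕ → Finset ℕ := fun S =>
    (Finset.range n).filter fun i : ℕ => (m S : ℤ) + i ∈ FB C with hφ
  set T := (Finset.range n).powerset.filter fun S => 2 * S.card ≤ n with h_T
  set k := ⌈θ * n / 2⌉₊ with hk
  have hφk : ∀ S ∈ T, k ≤ (φ S).card := by
    intro S hS
    simp only [h_T, Finset.mem_filter, Finset.mem_powerset] at hS
    refine Nat.ceil_le.2 (le_trans ?_ (hm S hS.1).2)
    have : (2 : ℝ) * S.card ≤ n := by exact_mod_cast hS.2
    nlinarith
  have hhalf : 2 ^ n ≤ 2 * T.card := by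
    have h1 : (Finset.range n).powerset ⊆ T ∪ T.image fun S => Finset.range n \ S := by
      intro S hS
      have hS' := Finset.mem_powerset.1 hS
      rw [Finset.mem_union]
      by_cases hc : 2 * S.card ≤ n
      · exact Or.inl (Finset.mem_filter.2 ⟨hS, hc⟩)
      · refine Or.inr (Finset.mem_image.2 ⟨Finset.range n \ S, ?_, ?_⟩)
        · refine Finset.mem_filter.2 ⟨Finset.mem_powerset.2 Finset.sdiff_subset, ?_⟩
          rw [Finset.card_sdiff_of_subset hS', Finset.card_range]
          omega
        · exact Finset.sdiff_sdiff_eq_self hS'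
    have h2 := (Finset.card_le_card h1).trans (Finset.card_union_le _ _)
    rw [Finset.card_powerset, Finset.card_range] at h2
    have h3 : (T.image fun S => Finset.range n \ S).card ≤ T.card := Finset.card_image_le
    omega
  have hfib : T.card ≤ 2 ^ (n - k) * (T.image φ).card := by
    refine Finset.card_le_mul_card_image T _ fun p hp => ?_
    obtain ⟨S₀, hS₀, rfl⟩ := Finset.mem_image.1 hp
    have h1 : (T.filter fun S => φ S = φ S₀) ⊆ (Finset.range n \ φ S₀).powerset := by
      intro S hS
      obtain ⟨hS1, hS2⟩ := Finset.mem_filter.1 hS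
      have hS3 := Finset.mem_powerset.1 (Finset.mem_filter.1 hS1).1
      rw [Finset.mem_powerset, ← hS2]
      intro j hj
      refine Finset.mem_sdiff.2 ⟨hS3 hj, fun h => ?_⟩
      exact (Finset.mem_filter.1 h).2 ((hm S hS3).1 j hj)
    refine (Finset.card_le_card h1).trans ?_
    rw [Finset.card_powerset, Finset.card_sdiff_of_subset (Finset.filter_subset _ _),
      Finset.card_range]
    exact Nat.pow_le_pow_right two_pos (Nat.sub_le_sub_left (hφk S₀ hS₀) n)
  refine ⟨T.image φ, ?_, ?_⟩
  · have hkn : k ≤ n := by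
      have h0 : (∅ : Finset ℕ) ∈ T := by simp [h_T]
      refine (hφk ∅ h0).trans ((Finset.card_filter_le _ _).trans (by simp))
    have h1 : 2 ^ (n - k) * 2 ^ k ≤ 2 ^ (n - k) * (2 * (T.image φ).card) := by
      rw [← pow_add, Nat.sub_add_cancel hkn]
      nlinarith
    exact Nat.le_of_mul_le_mul_left h1 (by positivity)
  · intro p hp
    obtain ⟨S, -, rfl⟩ := Finset.mem_image.1 hp
    exact ⟨m S, rfl⟩

/-- Different patterns for `divSet B d`, read along `dℤ`, come from different blocks of `eta B`. -/
lemma patterns_le_pCount {B : Set ℕ} {d : ℕ} (hd : 0 < d) (n : ℕ) (W : Finset (Finset ℕ))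
    (hW : ∀ p ∈ W, ∃ m : ℕ,
      p = (Finset.range n).filter fun i : ℕ => (m : ℤ) + i ∈ FB (divSet B d)) :
    W.card ≤ pCount (Xeta B) (d * n) := by
  set g : (Fin (d * n) → Bool) → Finset ℕ := fun w =>
    (Finset.range n).filter fun i => ∃ h : d * i < d * n, w ⟨d * i, h⟩ = true with hg
  have hsub : (W : Set (Finset ℕ)) ⊆ g '' blocks (Xeta B) (d * n) := by
    intro p hp
    obtain ⟨m, rfl⟩ := hW p hp
    refine ⟨fun i => eta B ((i : ℤ) + d * m), ⟨_, self_mem_orbitClosure (eta B) (d * m), 0,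
      fun i => by simp⟩, ?_⟩
    rw [hg]; dsimp only
    refine Finset.filter_congr fun i hi => ?_
    have hi' : d * i < d * n := Nat.mul_lt_mul_of_pos_left (Finset.mem_range.1 hi) hd
    have : ((d * i : ℕ) : ℤ) + d * m = d * (m + i) := by push_cast; ring
    simp only [hi', exists_true_left, eta_eq_true, this]
    exact not_congr (mem_MB_divSet hd _)
  have h1 := Set.ncard_le_ncard hsub ((Set.toFinite _).image _)
  rw [Set.ncard_coe_finset] at h1
  exact h1.trans (Set.ncard_image_le (Set.toFinite _))

/-- Zero entropy forces the free numbers of finite subsets of `divSet B d` to be sparse. -/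
lemma exists_sparse {B : Set ℕ} (hB : 0 ∉ B) (hent : topEnt (Xeta B) = 0) {d : ℕ}
    (hd : d ∈ Dset B) {θ : ℝ} (hθ : 0 < θ) :
    ∃ K : Finset ℕ, (K : Set ℕ) ⊆ divSet B d ∧
      (wcount (FB (K : Set ℕ)) 0 (∏ b ∈ K, b) : ℝ) < θ * (∏ b ∈ K, b : ℕ) := by
  by_contra! hcon
  have hd0 : 0 < d := pos_of_mem_union hB (Or.inr hd)
  have hd0' : (0 : ℝ) < d := by exact_mod_cast hd0
  have hev := eventually_of_topEnt hent (show 0 < θ / (4 * d) by positivity)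
  obtain ⟨N, hN⟩ := eventually_atTop.1 hev
  obtain ⟨n₁, hn₁⟩ := exists_nat_gt (4 / θ)
  set n := max (max N n₁) 1 with hn
  have hnN : N ≤ d * n := le_trans (le_trans (le_max_left N n₁) (le_max_left _ 1))
    (Nat.le_mul_of_pos_left n hd0)
  have hn1 : 1 ≤ n := le_max_right _ _
  have hn0' : (0 : ℝ) < n := by exact_mod_cast hn1
  have hnn : (4 : ℝ) / θ < n := lt_of_lt_of_le hn₁
    (by exact_mod_cast le_trans (le_max_right N n₁) (le_max_left _ 1))
  obtain ⟨W, h1, h2⟩ := pow_le_patterns (zero_notMem_divSet hB) (exists_mem_divSet hd0 hd) hθ.le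
    hcon n
  have h3 := patterns_le_pCount hd0 n W h2
  set p := pCount (Xeta B) (d * n) with hp
  have h4 : (2 : ℝ) ^ ((⌈θ * n / 2⌉₊ : ℕ) : ℝ) ≤ 2 * p := by
    rw [Real.rpow_natCast]; exact_mod_cast h1.trans (Nat.mul_le_mul_left 2 h3)
  have hp0 : (0 : ℝ) < p := by
    have : (0 : ℝ) < (2 : ℝ) ^ ((⌈θ * n / 2⌉₊ : ℕ) : ℝ) := by positivity
    linarith
  have h5 := (Real.le_logb_iff_rpow_le one_lt_two (by positivity)).2 h4
  rw [Real.logb_mul two_ne_zero hp0.ne', Real.logb_self_eq_one one_lt_two] at h5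
  have h6 := Nat.le_ceil (θ * n / 2)
  have h7 := hN (d * n) hnN
  rw [div_lt_iff₀ (by push_cast; positivity)] at h7
  push_cast at h7
  have h8 : θ / (4 * d) * (d * n) = θ * n / 4 := by field_simp
  rw [h8] at h7
  rw [div_lt_iff₀ hθ] at hnn
  linarith

/-- A finite `K ⊆ divSet B d` with sparse free numbers gives a periodic sparse set containing the
`B`-free multiples of `d`. -/
lemma USmall_multiples {B : Set ℕ} (hB : 0 ∉ B) (hent : topEnt (Xeta B) = 0) {d : ℕ}
    (hd : d ∈ Dset B) {θ : ℝ} (hθ : 0 < θ) :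
    USmall (FB B ∩ {z : ℤ | (d : ℤ) ∣ z}) θ := by
  have hd0 : 0 < d := pos_of_mem_union hB (Or.inr hd)
  obtain ⟨K, hK, hw⟩ := exists_sparse hB hent hd (half_pos hθ)
  set L := ∏ b ∈ K, b with hL
  have hLpos : 0 < L := Finset.prod_pos fun b hb => Nat.pos_of_ne_zero fun h =>
    zero_notMem_divSet hB (h ▸ hK (Finset.mem_coe.2 hb))
  have hper : PerSet (FB (K : Set ℕ)) L :=
    (PerSet_MB (B := (K : Set ℕ)) fun b hb => Finset.dvd_prod_of_mem _ (Finset.mem_coe.1 hb)).compl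
  have hd0' : (d : ℤ) ≠ 0 := by exact_mod_cast hd0.ne'
  set E : Set ℤ := {z | (d : ℤ) ∣ z ∧ z / d ∈ FB (K : Set ℕ)} with hE
  have hEper : PerSet E (d * L) := by
    intro z
    simp only [hE, Set.mem_ofPred_eq]
    push_cast
    rw [Int.dvd_add_left (dvd_mul_right (d : ℤ) L), Int.add_mul_ediv_left _ _ hd0', hper (z / d)]
  have hsub : FB B ∩ {z : ℤ | (d : ℤ) ∣ z} ⊆ E := by
    rintro z ⟨hz, k, rfl⟩
    refine ⟨dvd_mul_right _ _, ?_⟩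
    rw [Int.mul_ediv_cancel_left _ hd0']
    exact fun h => hz ((mem_MB_divSet hd0 k).2 (MB_mono hK h))
  have hcard : wcount E 0 (d * L) ≤ wcount (FB (K : Set ℕ)) 0 L := by
    rw [wcount_card, wcount_card]
    refine Finset.card_le_card_of_injOn (fun i => i / d) ?_ ?_
    · intro i hi
      simp only [Finset.coe_filter, Finset.mem_range, zero_add, Set.mem_ofPred_eq, hE] at hi ⊢
      refine ⟨Nat.div_lt_of_lt_mul hi.1, ?_⟩
      simpa using hi.2.2
    · intro i hi j hj hij
      simp only [Finset.coe_filter, Finset.mem_range, zero_add, Set.mem_ofPred_eq, hE] at hi hj hij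
      have h1 := Nat.div_mul_cancel (Int.natCast_dvd_natCast.1 hi.2.1)
      have h2 := Nat.div_mul_cancel (Int.natCast_dvd_natCast.1 hj.2.1)
      rw [← h1, ← h2, hij]
  refine (USmall.of_period hEper (Nat.mul_pos hd0 hLpos) (ρ := θ / 2) ?_ (by linarith)).mono
    hsub le_rfl
  have h1 : (wcount E 0 (d * L) : ℝ) ≤ wcount (FB (K : Set ℕ)) 0 L := by exact_mod_cast hcard
  have h2 : (L : ℝ) ≤ (d * L : ℕ) := by exact_mod_cast Nat.le_mul_of_pos_left L hd0
  nlinarith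

/-- The `B`-free numbers that are not free with respect to `B ∪ Dset B`; these are the positions
where `eta B` and `etaStar B` differ. -/
def ZB (B : Set ℕ) : Set ℤ := FB B ∩ MB (B ∪ Dset B)

/-- Zero entropy makes `ZB B` uniformly sparse. -/
lemma USmall_of_topEnt {B : Set ℕ} (hB : 0 ∉ B) (hreg : RegularToeplitz (etaStar B))
    (hent : topEnt (Xeta B) = 0) {ε : ℝ} (hε : 0 < ε) : USmall (ZB B) ε := by
  obtain ⟨Q, R, hQ, hR, hRper, hRc⟩ := hreg.exists_period (show 0 < ε / 4 by linarith)
  have h1 : USmall Rᶜ (ε / 2) := USmall.of_period hR.compl hQ hRc (by linarith)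
  set s := Q.divisors.filter fun d => d ∈ Dset B with hs
  have h2 := USmall.biUnion s (fun d => FB B ∩ {z : ℤ | (d : ℤ) ∣ z}) (ε / (2 * (s.card + 1)))
    (fun d hd => USmall_multiples hB hent (Finset.mem_filter.1 hd).2 (by positivity))
  refine (h2.union h1).mono ?_ ?_
  · intro z hz
    by_cases hzR : z ∈ R
    · left
      have hstar : ∀ w : ℤ, etaStar B w = false ↔ w ∈ MB (B ∪ Dset B) := by
        intro w
        rw [← MB_Bstar hB, ← Bool.not_eq_true, etaStar, eta_eq_true, FB, Set.mem_ofPred_eq, not_not]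
      obtain ⟨b, hb, hbQ, hbz⟩ := exists_dvd_gcd_of_progression (B := B) hQ (i := z) (fun k => by
        rw [← hstar, hRper z hzR k, hstar]; exact hz.2)
      have hbD : b ∈ Dset B := hb.resolve_left fun h => hz.1 ⟨b, h, hbz⟩
      exact Set.mem_biUnion (Finset.mem_filter.2 ⟨Nat.mem_divisors.2 ⟨hbQ, hQ.ne'⟩, hbD⟩)
        ⟨hz.1, hbz⟩
    · exact Or.inr hzR
  · have : (s.card : ℝ) * (ε / (2 * (s.card + 1))) ≤ ε / 2 := by
      rw [← mul_div_assoc, div_le_div_iff₀ (by positivity) two_pos]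
      nlinarith
    linarith

/-! ### Invariant measures on orbit closures -/

/-- The translate of `x` by `k`. -/
def tr (x : ℤ → Bool) (k : ℤ) : ℤ → Bool := fun m => x (m + k)

lemma shift_tr (x : ℤ → Bool) (k : ℤ) : shift (tr x k) = tr x (k + 1) := by
  funext m
  simp only [shift, tr]
  congr 1
  ring

lemma continuous_shift : Continuous shift :=
  continuous_pi fun n => continuous_apply (n + 1)

/-- The average of `f` along the translates of `x` by the elements of `[k, k + n)`. -/
def wavg (f : (ℤ → Bool) → ℝ) (x : ℤ → Bool) (k : ℤ) (n : ℕ) : ℝ :=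
  (∑ i ∈ Finset.range n, f (tr x (k + (i : ℕ)))) / n

lemma exists_bound (f : C((ℤ → Bool), ℝ)) : ∃ C : ℝ, 0 < C ∧ ∀ y, |f y| ≤ C :=
  ⟨‖f‖ + 1, by positivity, fun y => (f.norm_coe_le_norm y).trans (by linarith)⟩

lemma integrable_cont (f : C((ℤ → Bool), ℝ)) (μ : Measure (ℤ → Bool)) [IsFiniteMeasure μ] :
    Integrable f μ :=
  (BoundedContinuousFunction.mkOfCompact f).integrable μ

lemma measure_ext {μ ν : Measure (ℤ → Bool)} [IsFiniteMeasure μ] [IsFiniteMeasure ν]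
    (h : ∀ f : C((ℤ → Bool), ℝ), ∫ y, f y ∂μ = ∫ y, f y ∂ν) : μ = ν :=
  ext_of_forall_integral_eq_of_IsFiniteMeasure fun f => h f.toContinuousMap

lemma wavg_shift_sub (f : (ℤ → Bool) → ℝ) (x : ℤ → Bool) (k : ℤ) (n : ℕ) :
    wavg (fun y => f (shift y)) x k n - wavg f x k n = (f (tr x (k + n)) - f (tr x k)) / n := by
  unfold wavg
  rw [← sub_div, ← Finset.sum_sub_distrib]
  congr 1
  have : ∀ i : ℕ, f (shift (tr x (k + (i : ℕ)))) = f (tr x (k + ((i + 1 : ℕ) : ℤ))) := by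
    intro i
    rw [shift_tr]; push_cast; rw [add_assoc]
  simp only [this]
  rw [Finset.sum_range_sub (fun i : ℕ => f (tr x (k + (i : ℕ)))) n]
  simp

/-- The empirical measure of `x` along the window `[k, k + n)`. -/
def emp (x : ℤ → Bool) (k : ℤ) (n : ℕ) : Measure (ℤ → Bool) :=
  (n : ENNReal)⁻¹ • ∑ i ∈ Finset.range n, Measure.dirac (tr x (k + (i : ℕ)))

lemma emp_prob (x : ℤ → Bool) (k : ℤ) {n : ℕ} (hn : 0 < n) : IsProbabilityMeasure (emp x k n) := by
  constructor
  simp only [emp, Measure.smul_apply, Measure.finsetSum_apply, measure_univ, Finset.sum_const,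
    Finset.card_range, nsmul_eq_mul, mul_one, smul_eq_mul]
  exact ENNReal.inv_mul_cancel (by exact_mod_cast hn.ne') (ENNReal.natCast_ne_top n)

lemma integral_emp (f : C((ℤ → Bool), ℝ)) (x : ℤ → Bool) (k : ℤ) (n : ℕ) :
    ∫ y, f y ∂(emp x k n) = wavg f x k n := by
  unfold emp wavg
  rw [integral_smul_measure, integral_finsetSum_measure fun i _ => integrable_cont f _]
  simp only [integral_dirac, ENNReal.toReal_inv, ENNReal.toReal_natCast, smul_eq_mul]
  rw [div_eq_inv_mul]

lemma emp_orbit (x : ℤ → Bool) (k : ℤ) {n : ℕ} (hn : 0 < n) :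
    emp x k n (orbitClosure x) = 1 := by
  have hm : MeasurableSet (orbitClosure x) := isClosed_closure.measurableSet
  have : ∀ k : ℤ, Measure.dirac (tr x k) (orbitClosure x) = 1 := fun k => by
    rw [Measure.dirac_apply' _ hm, Set.indicator_of_mem (show tr x k ∈ orbitClosure x from self_mem_orbitClosure x k)]; rfl
  simp only [emp, Measure.smul_apply, Measure.finsetSum_apply, this, Finset.sum_const,
    Finset.card_range, nsmul_eq_mul, mul_one, smul_eq_mul]
  exact ENNReal.inv_mul_cancel (by exact_mod_cast hn.ne') (ENNReal.natCast_ne_top n)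

/-- Krylov–Bogolyubov along arbitrary windows whose lengths tend to infinity. -/
lemma exists_invariant (x : ℤ → Bool) (k : ℕ → ℤ) (n : ℕ → ℕ) (hn0 : ∀ j, 0 < n j)
    (hn : Tendsto n atTop atTop) :
    ∃ μ ∈ InvM (orbitClosure x), ∀ f : C((ℤ → Bool), ℝ),
      Tendsto (fun j => wavg f x (k j) (n j)) (hyperfilter ℕ) (𝓝 (∫ y, f y ∂μ)) := by
  set P : ℕ → ProbabilityMeasure (ℤ → Bool) := fun j => ⟨emp x (k j) (n j), emp_prob x _ (hn0 j)⟩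
    with hP
  obtain ⟨μ, -, hμ⟩ := (isCompact_univ (X := ProbabilityMeasure (ℤ → Bool))).ultrafilter_le_nhds
    ((hyperfilter ℕ).map P) (by simp)
  have hlim : Tendsto P (hyperfilter ℕ) (𝓝 μ) := hμ
  have hInt : ∀ f : C((ℤ → Bool), ℝ),
      Tendsto (fun j => wavg f x (k j) (n j)) (hyperfilter ℕ) (𝓝 (∫ y, f y ∂(μ : Measure _))) := by
    intro f
    have := ProbabilityMeasure.tendsto_iff_forall_integral_tendsto.1 hlim
      (BoundedContinuousFunction.mkOfCompact f)
    refine this.congr fun j => ?_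
    exact integral_emp f x (k j) (n j)
  have hn' : Tendsto (fun j => (n j : ℝ)) (hyperfilter ℕ) atTop :=
    (tendsto_natCast_atTop_atTop.comp hn).mono_left Nat.hyperfilter_le_atTop
  refine ⟨μ, ⟨inferInstance, ?_, ?_⟩, hInt⟩
  · have hp : IsProbabilityMeasure ((μ : Measure (ℤ → Bool)).map shift) :=
      Measure.isProbabilityMeasure_map continuous_shift.aemeasurable
    refine measure_ext fun f => ?_
    rw [integral_map continuous_shift.aemeasurable f.continuous.aestronglyMeasurable]
    set g : C((ℤ → Bool), ℝ) := f.comp ⟨shift, continuous_shift⟩ with hg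
    have h1 := (hInt g).sub (hInt f)
    obtain ⟨C, hC0, hC⟩ := exists_bound f
    have h2 : Tendsto (fun j => wavg g x (k j) (n j) - wavg f x (k j) (n j)) (hyperfilter ℕ)
        (𝓝 0) := by
      refine squeeze_zero_norm (a := fun j => 2 * C / n j) (fun j => ?_)
        (hn'.const_div_atTop _)
      have := wavg_shift_sub f x (k j) (n j)
      change ‖wavg (fun y => f (shift y)) x (k j) (n j) - wavg f x (k j) (n j)‖ ≤ _
      rw [this, norm_div, Real.norm_natCast]
      refine div_le_div_of_nonneg_right ?_ (Nat.cast_nonneg _)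
      refine (abs_sub _ _).trans ?_
      linarith [hC (tr x (k j + n j)), hC (tr x (k j))]
    exact sub_eq_zero.1 (tendsto_nhds_unique h1 h2)
  · have h1 := ProbabilityMeasure.limsup_measure_closed_le_of_tendsto hlim
      (F := orbitClosure x) isClosed_closure
    have h2 : ∀ j, (P j : Measure (ℤ → Bool)) (orbitClosure x) = 1 := fun j =>
      emp_orbit x (k j) (hn0 j)
    simp only [h2, limsup_const] at h1
    exact le_antisymm prob_le_one h1

/-- Unique ergodicity forces the density of `1`s to be the same in all long windows. -/
lemma uniform_of_unique {x : ℤ → Bool} (h : ∃! μ, μ ∈ InvM (orbitClosure x)) {ε : ℝ}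
    (hε : 0 < ε) : ∃ N : ℕ, ∀ n ≥ N, ∀ k l : ℤ,
      (wcount {i | x i = true} k n : ℝ) ≤ wcount {i | x i = true} l n + ε * n := by
  by_contra! hcon
  choose n hn k l hkl using fun j => hcon (j + 1)
  have hn0 : ∀ j, 0 < n j := fun j => lt_of_lt_of_le (Nat.succ_pos j) (hn j)
  have hlim : Tendsto n atTop atTop :=
    tendsto_atTop_mono (fun j => (Nat.le_succ j).trans (hn j)) tendsto_id
  obtain ⟨μ₁, h1, hf1⟩ := exists_invariant x k n hn0 hlim
  obtain ⟨μ₂, h2, hf2⟩ := exists_invariant x l n hn0 hlim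
  have heq := h.unique h1 h2
  set f : C((ℤ → Bool), ℝ) :=
    ⟨fun y => if y 0 = true then 1 else 0,
      (continuous_of_discreteTopology (f := fun b : Bool => if b = true then (1 : ℝ) else 0)).comp
        (continuous_apply 0)⟩ with hf
  have h3 := (hf1 f).sub (hf2 f)
  rw [heq, sub_self] at h3
  have hw : ∀ (k : ℤ) (n : ℕ), wavg f x k n = (wcount {i | x i = true} k n : ℝ) / n := by
    intro k n
    unfold wavg wcount
    push_cast
    simp [hf, tr]
  have h4 := h3.eventually (gt_mem_nhds hε)
  obtain ⟨j, hj⟩ := h4.exists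
  rw [hw, hw, ← sub_div, div_lt_iff₀ (by exact_mod_cast hn0 j)] at hj
  linarith [hkl j]

/-! ### Unique ergodicity makes `ZB B` sparse; almost periodicity of `eta B` -/

lemma etaStar_eq_true {B : Set ℕ} (hB : 0 ∉ B) {w : ℤ} :
    etaStar B w = true ↔ w ∈ FB (B ∪ Dset B) := by
  unfold etaStar
  rw [eta_eq_true, FB, FB, MB_Bstar hB]

lemma setOf_eta (B : Set ℕ) : {i | eta B i = true} = FB B := by
  ext i
  exact eta_eq_true

/-- At the positions `R` where `etaStar B` is `Q`-periodic, freeness with respect to the divisors of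
`Q` in `B ∪ Dset B` already implies freeness with respect to `B ∪ Dset B`. -/
lemma FB_divisors_subset {B : Set ℕ} (hB : 0 ∉ B) {Q : ℕ} (hQ : 0 < Q) {R : Set ℤ}
    (hR : ∀ i ∈ R, ∀ k : ℤ, etaStar B (i + Q * k) = etaStar B i) :
    FB {d | d ∈ B ∪ Dset B ∧ d ∣ Q} ⊆ FB (B ∪ Dset B) ∪ Rᶜ := by
  intro z hz
  by_cases hzR : z ∈ R
  · refine Or.inl fun hzM => hz ?_
    have hfree : ∀ k : ℤ, z + Q * k ∈ MB (B ∪ Dset B) := by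
      intro k
      by_contra hk
      have h1 := (etaStar_eq_true hB).2 hk
      rw [hR z hzR k, etaStar_eq_true hB] at h1
      exact h1 hzM
    obtain ⟨b, hb, hbQ, hbz⟩ := exists_dvd_gcd_of_progression hQ hfree
    exact ⟨b, ⟨hb, hbQ⟩, hbz⟩
  · exact Or.inr hzR

/-- Unique ergodicity makes `ZB B` uniformly sparse: some windows contain only those `B`-free
numbers that are forced by the divisors of `Q`, and all windows look alike. -/
lemma USmall_of_unique {B : Set ℕ} (hB : 0 ∉ B) (hreg : RegularToeplitz (etaStar B))
    (hu : ∃! μ, μ ∈ InvM (Xeta B)) {ε : ℝ} (hε : 0 < ε) : USmall (ZB B) ε := by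
  obtain ⟨Q, R, hQ, hR, hRper, hRc⟩ := hreg.exists_period (show 0 < ε / 8 by linarith)
  obtain ⟨N₁, hN₁⟩ := USmall.of_period hR.compl hQ hRc (show ε / 8 < ε / 4 by linarith)
  obtain ⟨N₂, hN₂⟩ := uniform_of_unique hu (show 0 < ε / 4 by linarith)
  rw [setOf_eta] at hN₂
  obtain ⟨N₃, hN₃⟩ := exists_nat_gt (Q / (ε / 4))
  refine ⟨max N₁ (max N₂ N₃), fun n hn k => ?_⟩
  have hn1 : N₁ ≤ n := le_trans (le_max_left _ _) hn
  have hn2 : N₂ ≤ n := le_trans (le_trans (le_max_left _ _) (le_max_right _ _)) hn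
  have hn3 : N₃ ≤ n := le_trans (le_trans (le_max_right _ _) (le_max_right _ _)) hn
  obtain ⟨P, l, -, -, hQl, hfull⟩ := exists_window_full (B := B) hQ n
  set D' : Set ℕ := {d | d ∈ B ∪ Dset B ∧ d ∣ Q} with hD'
  have hper : PerSet (FB D') Q := (PerSet_MB (B := D') fun b hb => hb.2).compl
  have h1 : wcount (FB B) l n ≤ wcount (FB D') l n := by
    unfold wcount
    refine Finset.sum_le_sum fun i hi => ?_
    have himp : (l : ℤ) + i ∈ FB B → (l : ℤ) + i ∈ FB D' := by
      rintro h ⟨d, ⟨hd, hdQ⟩, hdi⟩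
      refine h ?_
      have hdl : (d : ℤ) ∣ l := Int.natCast_dvd_natCast.2 (hdQ.trans hQl)
      have := hfull i (Finset.mem_range.1 hi)
        ⟨d, hd, hdQ, Int.natCast_dvd_natCast.1 ((Int.dvd_add_right hdl).1 hdi)⟩ l rfl
      exact_mod_cast this
    by_cases h : (l : ℤ) + i ∈ FB B
    · simp [h, himp h]
    · simp [h]
  have h2 := wcount_le_of_period hper hQ l n
  have h3 := le_wcount_of_period hper k n
  have h4 := wcount_le (FB D') 0 Q
  have h5 : wcount (FB D') k n ≤ wcount (FB (B ∪ Dset B)) k n + wcount Rᶜ k n :=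
    (wcount_mono (FB_divisors_subset hB hQ hRper) k n).trans (wcount_union_le _ _ _ _)
  have h6 : wcount (FB (B ∪ Dset B)) k n + wcount (ZB B) k n = wcount (FB B) k n := by
    unfold wcount
    rw [← Finset.sum_add_distrib]
    refine Finset.sum_congr rfl fun i _ => ?_
    have hsub : k + (i : ℤ) ∈ MB B → k + (i : ℤ) ∈ MB (B ∪ Dset B) :=
      fun h => MB_mono Set.subset_union_left h
    simp only [ZB, FB, Set.mem_inter_iff, Set.mem_ofPred_eq]
    by_cases ha : k + (i : ℤ) ∈ MB (B ∪ Dset B) <;> by_cases hb : k + (i : ℤ) ∈ MB B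
    · simp [ha, hb]
    · simp [ha, hb]
    · exact absurd (hsub hb) ha
    · simp [ha, hb]
  have h7 : wcount (FB B) l n ≤ wcount (FB (B ∪ Dset B)) k n + wcount Rᶜ k n + Q := by
    rw [add_mul, one_mul] at h2
    omega
  have h8 : (wcount (FB B) l n : ℝ) ≤
      wcount (FB (B ∪ Dset B)) k n + wcount Rᶜ k n + Q := by exact_mod_cast h7
  have h9 : (wcount (FB (B ∪ Dset B)) k n : ℝ) + wcount (ZB B) k n = wcount (FB B) k n := by
    exact_mod_cast h6
  have h10 := hN₂ n hn2 k l
  have h11 := hN₁ n hn1 k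
  have h12 : (Q : ℝ) ≤ ε / 4 * n := by
    rw [div_lt_iff₀ (by linarith)] at hN₃
    have : (N₃ : ℝ) ≤ n := by exact_mod_cast hn3
    nlinarith
  have : 0 ≤ ε * n := by positivity
  linarith

/-- `x` is a limit of periodic sequences for the distance given by the upper Banach density of the
set of disagreements. -/
def BAP (x : ℤ → Bool) : Prop :=
  ∀ ε : ℝ, 0 < ε → ∃ (Q : ℕ) (y : ℤ → Bool), 0 < Q ∧ (∀ i, y (i + Q) = y i) ∧
    USmall {i | x i ≠ y i} ε

/-- When `ZB B` is sparse, `eta B` is approximated by the periodic part of `etaStar B`. -/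
lemma BAP_eta {B : Set ℕ} (hB : 0 ∉ B) (hreg : RegularToeplitz (etaStar B))
    (hZ : ∀ ε : ℝ, 0 < ε → USmall (ZB B) ε) : BAP (eta B) := by
  intro ε hε
  obtain ⟨Q, R, hQ, hR, hRper, hRc⟩ := hreg.exists_period (show 0 < ε / 4 by linarith)
  have h1 : USmall Rᶜ (ε / 2) := USmall.of_period hR.compl hQ hRc (by linarith)
  refine ⟨Q, fun i => if i ∈ R then etaStar B i else false, hQ, fun i => ?_, ?_⟩
  · by_cases hi : i ∈ R
    · have := hRper i hi 1
      rw [mul_one] at this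
      simp only [hi, (hR i).1 hi, if_true, this]
    · have : i + (Q : ℤ) ∉ R := fun h => hi ((hR i).2 h)
      simp only [hi, this, if_false]
  · refine ((hZ (ε / 2) (by linarith)).union h1).mono ?_ (by linarith)
    intro i hi
    by_cases hiR : i ∈ R
    · refine Or.inl ?_
      simp only [Set.mem_ofPred_eq, hiR, if_true, ne_eq] at hi
      rw [Bool.eq_iff_iff, eta_eq_true, etaStar_eq_true hB] at hi
      have hsub : i ∈ MB B → i ∈ MB (B ∪ Dset B) := fun h => MB_mono Set.subset_union_left h
      refine ⟨?_, ?_⟩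
      · intro hb
        exact hi ⟨fun h => absurd hb h, fun h => absurd (hsub hb) h⟩
      · by_contra hb
        exact hi ⟨fun _ => hb, fun _ h => hb (hsub h)⟩
    · exact Or.inr hiR

/-! ### Entropy and averages of almost periodic sequences -/

/-- Blocks of the orbit closure already occur in `x`. -/
lemma block_of_orbitClosure {x : ℤ → Bool} {n : ℕ} {w : Fin n → Bool}
    (hw : w ∈ blocks (orbitClosure x) n) : ∃ m : ℤ, ∀ i : Fin n, x (m + (i : ℤ)) = w i := by
  obtain ⟨y, hy, m, hm⟩ := hw
  have hopen : IsOpen {z : ℤ → Bool | ∀ i : Fin n, z (m + (i : ℤ)) = w i} := by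
    have hU : {z : ℤ → Bool | ∀ i : Fin n, z (m + (i : ℤ)) = w i} =
        ⋂ i : Fin n, (fun z : ℤ → Bool => z (m + ((i : ℕ) : ℤ))) ⁻¹' {w i} := by
      ext z; simp
    rw [hU]
    exact isOpen_iInter_of_finite fun i =>
      (isOpen_discrete {w i}).preimage (continuous_apply (m + ((i : ℕ) : ℤ)))
  obtain ⟨z, hz, ⟨k, rfl⟩⟩ := mem_closure_iff.1 hy _ hopen hm
  refine ⟨m + k, fun i => ?_⟩
  rw [← hz i]
  congr 1
  ring

lemma periodic_mul {y : ℤ → Bool} {Q : ℕ} (hy : ∀ i, y (i + Q) = y i) (i k : ℤ) :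
    y (i + Q * k) = y i := by
  have h : PerSet {i | y i = true} Q := fun i => by simp only [Set.mem_ofPred_eq, hy i]
  have := h.mul i k
  simp only [Set.mem_ofPred_eq] at this
  rw [Bool.eq_iff_iff]
  exact this.symm

/-- Volume of a Hamming ball. -/
lemma card_small_le (n : ℕ) {θ z : ℝ} (hz0 : 0 < z) (hz1 : z ≤ 1) :
    (((Finset.univ : Finset (Finset (Fin n))).filter fun S => (S.card : ℝ) ≤ θ * n).card : ℝ) *
      z ^ (θ * n) ≤ (1 + z) ^ n := by
  have h1 := Finset.sum_pow_mul_eq_add_pow z 1 (Finset.univ : Finset (Fin n))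
  rw [Finset.powerset_univ, Finset.card_univ, Fintype.card_fin, add_comm z 1] at h1
  rw [← h1, ← nsmul_eq_mul, ← Finset.sum_const]
  refine le_trans (Finset.sum_le_sum fun S hS => ?_)
    (Finset.sum_le_sum_of_subset_of_nonneg (Finset.filter_subset _ _)
      fun S _ _ => by positivity)
  rw [one_pow, mul_one, ← Real.rpow_natCast]
  exact Real.rpow_le_rpow_of_exponent_ge hz0 hz1 (Finset.mem_filter.1 hS).2

/-- Every block of `x` of length `n` is one of the `Q` blocks of `y`, modified at few places. -/
lemma pCount_le_of_close {x y : ℤ → Bool} {Q : ℕ} (hQ : 0 < Q) (hy : ∀ i, y (i + Q) = y i)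
    {θ : ℝ} {n : ℕ} (h : ∀ k : ℤ, (wcount {i | x i ≠ y i} k n : ℝ) ≤ θ * n) :
    pCount (orbitClosure x) n ≤
      Q * ((Finset.univ : Finset (Finset (Fin n))).filter fun S => (S.card : ℝ) ≤ θ * n).card := by
  set T := (Finset.univ : Finset (Finset (Fin n))).filter fun S => (S.card : ℝ) ≤ θ * n with hT
  set F : ℕ × Finset (Fin n) → (Fin n → Bool) := fun p i =>
    if i ∈ p.2 then !(y (p.1 + (i : ℕ))) else y (p.1 + (i : ℕ)) with hF
  have hsub : blocks (orbitClosure x) n ⊆ ((Finset.range Q ×ˢ T).image F : Finset _) := by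
    intro w hw
    obtain ⟨m, hm⟩ := block_of_orbitClosure hw
    have hQ' : (0 : ℤ) < Q := by exact_mod_cast hQ
    have hr0 := Int.emod_nonneg m hQ'.ne'
    have hr1 := Int.emod_lt_of_pos m hQ'
    have hr : ((m % Q).toNat : ℤ) = m % Q := Int.toNat_of_nonneg hr0
    have hyr : ∀ i : ℤ, y ((m % Q).toNat + i) = y (m + i) := by
      intro i
      rw [hr, ← periodic_mul hy (m % Q + i) (m / Q)]
      congr 1
      have := Int.emod_add_mul_ediv m Q
      linarith
    rw [Finset.mem_coe, Finset.mem_image]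
    refine ⟨((m % Q).toNat, Finset.univ.filter fun i : Fin n => x (m + (i : ℕ)) ≠ y (m + (i : ℕ))),
      Finset.mem_product.2 ⟨Finset.mem_range.2 (by omega), ?_⟩, ?_⟩
    · rw [hT, Finset.mem_filter]
      refine ⟨Finset.mem_univ _, le_trans (le_of_eq ?_) (h m)⟩
      unfold wcount
      rw [Finset.card_filter, Fin.sum_univ_eq_sum_range
        (fun i : ℕ => if x (m + (i : ℕ)) ≠ y (m + (i : ℕ)) then 1 else 0) n]
      refine congrArg _ (Finset.sum_congr rfl fun i _ => ?_)
      by_cases h' : x (m + (i : ℕ)) = y (m + (i : ℕ)) <;> simp [h']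
    · funext i
      rw [← hm i]
      simp only [hF, Finset.mem_filter, Finset.mem_univ, true_and, hyr]
      by_cases he : x (m + (i : ℕ)) = y (m + (i : ℕ))
      · simp [he]
      · rw [if_pos he]
        exact (Bool.eq_not_of_ne he).symm
  have h1 := Set.ncard_le_ncard hsub (Finset.finite_toSet _)
  rw [Set.ncard_coe_finset] at h1
  refine h1.trans (Finset.card_image_le.trans ?_)
  rw [Finset.card_product, Finset.card_range]

/-- Sequences that are almost periodic in density have zero entropy. -/
lemma topEnt_of_BAP {x : ℤ → Bool} (hx : BAP x) : topEnt (orbitClosure x) = 0 := by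
  have hlim : Tendsto (fun n : ℕ => Real.logb 2 (pCount (orbitClosure x) n) / n) atTop (𝓝 0) := by
    rw [Metric.tendsto_atTop]
    intro ε hε
    set ε' : ℝ := min (ε / 4) 1 with hε'
    have he0 : 0 < ε' := lt_min (by linarith) one_pos
    set z : ℝ := 2 ^ ε' - 1 with hz
    have hz0 : 0 < z := by
      have := Real.one_lt_rpow one_lt_two he0
      linarith
    have hz1 : z ≤ 1 := by
      have := Real.rpow_le_rpow_of_exponent_le one_le_two (min_le_right (ε / 4) 1)
      rw [Real.rpow_one] at this
      linarith
    have hlz : 0 ≤ -Real.logb 2 z := by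
      have := Real.logb_nonpos one_lt_two hz0.le hz1
      linarith
    obtain ⟨Q, y, hQ, hy, N₀, hN₀⟩ := hx (ε / (4 * (-Real.logb 2 z + 1))) (by positivity)
    set θ := ε / (4 * (-Real.logb 2 z + 1)) with hθ
    have hQ' : (0 : ℝ) < Q := by exact_mod_cast hQ
    obtain ⟨N₁, hN₁⟩ := exists_nat_gt (Real.logb 2 Q / (ε / 4))
    refine ⟨max (max N₀ N₁) 1, fun n hn => ?_⟩
    have hn0 : N₀ ≤ n := le_trans (le_trans (le_max_left _ _) (le_max_left _ _)) hn
    have hn1 : N₁ ≤ n := le_trans (le_trans (le_max_right _ _) (le_max_left _ _)) hn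
    have hnpos : (0 : ℝ) < n := by exact_mod_cast lt_of_lt_of_le one_pos (le_trans (le_max_right _ _) hn)
    rw [Real.dist_eq, sub_zero, abs_of_nonneg (div_nonneg (logb_nat_nonneg _) hnpos.le),
      div_lt_iff₀ hnpos]
    rcases Nat.eq_zero_or_pos (pCount (orbitClosure x) n) with hp | hp
    · rw [hp]; simp; positivity
    have hp' : (0 : ℝ) < pCount (orbitClosure x) n := by exact_mod_cast hp
    have h1 := pCount_le_of_close hQ hy (hN₀ n hn0)
    set T := (Finset.univ : Finset (Finset (Fin n))).filter fun S => (S.card : ℝ) ≤ θ * n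
    have h2 : (pCount (orbitClosure x) n : ℝ) ≤ Q * T.card := by exact_mod_cast h1
    have h3 : (T.card : ℝ) * z ^ (θ * n) ≤ (1 + z) ^ n := card_small_le n hz0 hz1
    have hzp : 0 < z ^ (θ * n) := Real.rpow_pos_of_pos hz0 _
    have h4 : (pCount (orbitClosure x) n : ℝ) * z ^ (θ * n) ≤ Q * (1 + z) ^ n := by
      calc _ ≤ Q * T.card * z ^ (θ * n) := mul_le_mul_of_nonneg_right h2 hzp.le
        _ = Q * (T.card * z ^ (θ * n)) := by ring
        _ ≤ _ := mul_le_mul_of_nonneg_left h3 hQ'.le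
    have h5 := Real.logb_le_logb_of_le one_lt_two (by positivity) h4
    rw [Real.logb_mul hp'.ne' hzp.ne', Real.logb_mul hQ'.ne' (by positivity),
      Real.logb_rpow_eq_mul_logb_of_pos hz0, Real.logb_pow] at h5
    have h6 : Real.logb 2 (1 + z) = ε' := by
      rw [hz, add_sub_cancel, Real.logb_rpow two_pos (by norm_num)]
    rw [h6] at h5
    have h7 : ε' ≤ ε / 4 := min_le_left _ _
    have h8 : θ * (-Real.logb 2 z) ≤ ε / 4 := by
      rw [hθ, div_mul_eq_mul_div, div_le_div_iff₀ (by positivity) (by norm_num)]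
      nlinarith
    have h9 : Real.logb 2 Q < ε / 4 * n := by
      rw [div_lt_iff₀ (by linarith)] at hN₁
      have : (N₁ : ℝ) ≤ n := by exact_mod_cast hn1
      nlinarith
    have h10 := mul_le_mul_of_nonneg_right h8 hnpos.le
    have h11 := mul_le_mul_of_nonneg_left h7 hnpos.le
    nlinarith
  exact hlim.limsup_eq

/-- A continuous function on sequences depends, up to `ε`, on finitely many coordinates only. -/
lemma exists_coords (f : C((ℤ → Bool), ℝ)) {ε : ℝ} (hε : 0 < ε) :
    ∃ M : ℕ, ∀ a b : ℤ → Bool, (∀ j ∈ Finset.Icc (-(M : ℤ)) M, a j = b j) →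
      |f a - f b| ≤ ε := by
  by_contra! hcon
  choose a b hab hf using hcon
  obtain ⟨c, -, hc⟩ := (isCompact_univ (X := ℤ → Bool)).ultrafilter_le_nhds
    ((hyperfilter ℕ).map a) (by simp)
  have ha : Tendsto a (hyperfilter ℕ) (𝓝 c) := hc
  have hb : Tendsto b (hyperfilter ℕ) (𝓝 c) := by
    rw [tendsto_pi_nhds] at ha ⊢
    intro j
    refine (ha j).congr' ?_
    refine Nat.hyperfilter_le_atTop ?_
    filter_upwards [eventually_ge_atTop j.natAbs] with M hM
    exact hab M j (Finset.mem_Icc.2 ⟨by omega, by omega⟩)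
  have h1 := ((f.continuous.tendsto c).comp ha).sub ((f.continuous.tendsto c).comp hb)
  rw [sub_self] at h1
  have h2 := h1.abs
  rw [abs_zero] at h2
  obtain ⟨M, hM⟩ := (h2.eventually (gt_mem_nhds hε)).exists
  exact absurd hM (not_lt.2 (hf M).le)

/-- Sequences that are close in density have close window averages. -/
lemma exists_close (f : C((ℤ → Bool), ℝ)) {ε : ℝ} (hε : 0 < ε) :
    ∃ θ : ℝ, 0 < θ ∧ ∀ x y : ℤ → Bool, USmall {i | x i ≠ y i} θ →
      ∃ N : ℕ, ∀ n ≥ N, ∀ k : ℤ, |wavg f x k n - wavg f y k n| ≤ ε := by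
  obtain ⟨M, hM⟩ := exists_coords f (half_pos hε)
  obtain ⟨C, hC0, hC⟩ := exists_bound f
  refine ⟨ε / (4 * C * (2 * M + 1)), by positivity, fun x y ⟨N, hN⟩ => ⟨N, fun n hn k => ?_⟩⟩
  set θ := ε / (4 * C * (2 * M + 1)) with hθ
  set E : Set ℤ := {i | x i ≠ y i} with hE
  set J := Finset.Icc (-(M : ℤ)) M with hJ
  have hJc : (J.card : ℝ) = 2 * M + 1 := by
    have : J.card = 2 * M + 1 := by rw [hJ, Int.card_Icc]; omega
    rw [this]; push_cast; ring
  have hpt : ∀ l : ℤ, |f (tr x l) - f (tr y l)| ≤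
      ε / 2 + 2 * C * ∑ j ∈ J, (if l + j ∈ E then (1 : ℝ) else 0) := by
    intro l
    by_cases hl : ∀ j ∈ J, tr x l j = tr y l j
    · refine (hM _ _ hl).trans ?_
      have : 0 ≤ ∑ j ∈ J, (if l + j ∈ E then (1 : ℝ) else 0) :=
        Finset.sum_nonneg fun j _ => by split_ifs <;> simp
      nlinarith
    · push Not at hl
      obtain ⟨j, hj, hne⟩ := hl
      have hjE : l + j ∈ E := by
        have h' : x (j + l) ≠ y (j + l) := hne
        rwa [add_comm] at h'
      have h1 : (1 : ℝ) ≤ ∑ j ∈ J, (if l + j ∈ E then (1 : ℝ) else 0) := by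
        refine le_trans (by rw [if_pos hjE]) (Finset.single_le_sum
          (f := fun j => if l + j ∈ E then (1 : ℝ) else 0)
          (fun j _ => by split_ifs <;> simp) hj)
      have h2 := abs_sub (f (tr x l)) (f (tr y l))
      nlinarith [hC (tr x l), hC (tr y l)]
  rcases Nat.eq_zero_or_pos n with rfl | hn0
  · simp [wavg]; exact hε.le
  have hn' : (0 : ℝ) < n := by exact_mod_cast hn0
  unfold wavg
  rw [← sub_div, ← Finset.sum_sub_distrib, abs_div, Nat.abs_cast, div_le_iff₀ hn']
  have hw : ∀ j ∈ J, ∑ i ∈ Finset.range n, (if k + (i : ℕ) + j ∈ E then (1 : ℝ) else 0) ≤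
      θ * n := by
    intro j _
    refine le_trans (le_of_eq ?_) (hN n hn (k + j))
    unfold wcount
    push_cast
    refine Finset.sum_congr rfl fun i _ => ?_
    rw [add_right_comm]
  calc _ ≤ ∑ i ∈ Finset.range n, |f (tr x (k + (i : ℕ))) - f (tr y (k + (i : ℕ)))| :=
        Finset.abs_sum_le_sum_abs _ _
    _ ≤ ∑ i ∈ Finset.range n, (ε / 2 + 2 * C * ∑ j ∈ J,
          (if k + (i : ℕ) + j ∈ E then (1 : ℝ) else 0)) :=
        Finset.sum_le_sum fun i _ => hpt _
    _ = n * (ε / 2) + 2 * C * ∑ j ∈ J, ∑ i ∈ Finset.range n,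
          (if k + (i : ℕ) + j ∈ E then (1 : ℝ) else 0) := by
        rw [Finset.sum_add_distrib, ← Finset.mul_sum, Finset.sum_comm]
        simp
    _ ≤ n * (ε / 2) + 2 * C * ∑ j ∈ J, θ * n := by
        have := Finset.sum_le_sum hw
        nlinarith
    _ = ε * n := by
        rw [Finset.sum_const, nsmul_eq_mul, hJc, hθ]
        field_simp
        ring

/-! ### Uniqueness of the invariant measure and the Mirsky measures -/

lemma wavg_periodic (f : (ℤ → Bool) → ℝ) {y : ℤ → Bool} {Q : ℕ} (hy : ∀ i, y (i + Q) = y i)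
    (N : ℕ) (k : ℤ) : wavg f y k (Q * N) = wavg f y 0 (Q * N) := by
  have hstep : ∀ k : ℤ, wavg f y (k + 1) (Q * N) = wavg f y k (Q * N) := by
    intro k
    have h1 := wavg_shift_sub f y k (Q * N)
    have h2 : tr y (k + (Q * N : ℕ)) = tr y k := by
      funext m
      simp only [tr]
      rw [← periodic_mul hy (m + k) N]
      congr 1
      push_cast
      ring
    rw [h2, sub_self, zero_div, sub_eq_zero] at h1
    rw [← h1]
    unfold wavg
    congr 1
    refine Finset.sum_congr rfl fun i _ => ?_
    change f _ = f (shift _)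
    rw [shift_tr]
    congr 2
    ring
  induction k using Int.induction_on with
  | zero => rfl
  | succ k ih => rw [hstep, ih]
  | pred k ih => rw [← ih, ← hstep (-(k : ℤ) - 1), sub_add_cancel]

lemma continuous_tr (k : ℤ) : Continuous fun z : ℤ → Bool => tr z k :=
  continuous_pi fun n => continuous_apply (n + k)

lemma map_tr {μ : Measure (ℤ → Bool)} (h : μ.map shift = μ) (i : ℕ) :
    μ.map (fun z => tr z (i : ℕ)) = μ := by
  induction i with
  | zero =>
    have : (fun z : ℤ → Bool => tr z ((0 : ℕ) : ℤ)) = id := by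
      funext z m; simp [tr]
    rw [this, Measure.map_id]
  | succ i ih =>
    have : (fun z : ℤ → Bool => tr z ((i + 1 : ℕ) : ℤ)) = shift ∘ fun z => tr z (i : ℕ) := by
      funext z
      simp only [Function.comp, shift_tr]
      push_cast; rfl
    rw [this, ← Measure.map_map continuous_shift.measurable (continuous_tr _).measurable, ih, h]

lemma integral_wavg {x : ℤ → Bool} {μ : Measure (ℤ → Bool)} (hμ : μ ∈ InvM (orbitClosure x))
    (f : C((ℤ → Bool), ℝ)) {n : ℕ} (hn : 0 < n) : ∫ z, wavg f z 0 n ∂μ = ∫ z, f z ∂μ := by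
  obtain ⟨hp, hinv, -⟩ := hμ
  have hn' : (n : ℝ) ≠ 0 := by exact_mod_cast hn.ne'
  have h1 : ∀ i : ℕ, ∫ z, f (tr z (0 + (i : ℕ))) ∂μ = ∫ z, f z ∂μ := by
    intro i
    rw [zero_add]
    conv_rhs => rw [← map_tr hinv i]
    rw [integral_map (continuous_tr _).aemeasurable f.continuous.aestronglyMeasurable]
  unfold wavg
  rw [integral_div, integral_finsetSum]
  · simp only [h1, Finset.sum_const, Finset.card_range, nsmul_eq_mul]
    field_simp
  · intro i _
    exact integrable_cont (f.comp ⟨_, continuous_tr _⟩) μ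

/-- If all long window averages along `x` are within `ε` of `c`, then so is the integral against
every invariant measure on the orbit closure. -/
lemma integral_near {x : ℤ → Bool} {μ : Measure (ℤ → Bool)} (hμ : μ ∈ InvM (orbitClosure x))
    (f : C((ℤ → Bool), ℝ)) {n : ℕ} (hn : 0 < n) {c ε : ℝ}
    (h : ∀ k : ℤ, |wavg f x k n - c| ≤ ε) : |∫ z, f z ∂μ - c| ≤ ε := by
  have hcont : Continuous fun z => wavg f z 0 n := by
    unfold wavg
    exact (continuous_finsetSum _ fun i _ => f.continuous.comp (continuous_tr _)).div_const _
  have hall : ∀ z ∈ orbitClosure x, |wavg f z 0 n - c| ≤ ε := by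
    intro z hz
    have hcl : IsClosed {z : ℤ → Bool | |wavg f z 0 n - c| ≤ ε} :=
      isClosed_le ((hcont.sub continuous_const).abs) continuous_const
    refine closure_minimal ?_ hcl hz
    rintro _ ⟨m, rfl⟩
    have : wavg f (fun n => x (n + m)) 0 n = wavg f x m n := by
      unfold wavg
      congr 1
      refine Finset.sum_congr rfl fun i _ => ?_
      congr 1
      funext l
      simp only [tr]
      congr 1
      ring
    rw [Set.mem_ofPred_eq, this]
    exact h m
  have hp := hμ.1
  have hInt : Integrable (fun z => wavg f z 0 n) μ := integrable_cont ⟨_, hcont⟩ μ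
  have hae : ∀ᵐ z ∂μ, ‖wavg f z 0 n - c‖ ≤ ε := by
    have h1 : ∀ᵐ z ∂μ, z ∈ orbitClosure x :=
      (prob_compl_eq_zero_iff isClosed_closure.measurableSet).2 hμ.2.2
    filter_upwards [h1] with z hz using hall z hz
  have h2 := norm_integral_le_of_norm_le_const hae
  rw [integral_sub hInt (integrable_const c), integral_wavg hμ f hn, integral_const] at h2
  simpa using h2

/-- Window averages along a periodic sequence over full periods do not depend on the window, so
those along `x` are almost constant. -/
lemma unique_of_BAP {x : ℤ → Bool} (hx : BAP x) {μ₁ μ₂ : Measure (ℤ → Bool)}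
    (h₁ : μ₁ ∈ InvM (orbitClosure x)) (h₂ : μ₂ ∈ InvM (orbitClosure x)) : μ₁ = μ₂ := by
  have hp1 := h₁.1
  have hp2 := h₂.1
  refine measure_ext fun f => eq_of_forall_dist_le fun ε hε => ?_
  obtain ⟨θ, hθ, hclose⟩ := exists_close f (half_pos hε)
  obtain ⟨Q, y, hQ, hy, hxy⟩ := hx θ hθ
  obtain ⟨N, hN⟩ := hclose x y hxy
  have hn : 0 < Q * (N + 1) := Nat.mul_pos hQ N.succ_pos
  have hNn : N ≤ Q * (N + 1) := by nlinarith
  have key : ∀ k : ℤ, |wavg f x k (Q * (N + 1)) - wavg f y 0 (Q * (N + 1))| ≤ ε / 2 := by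
    intro k
    rw [← wavg_periodic f hy (N + 1) k]
    exact hN _ hNn k
  have e1 := abs_le.1 (integral_near h₁ f hn key)
  have e2 := abs_le.1 (integral_near h₂ f hn key)
  rw [Real.dist_eq, abs_le]
  constructor <;> linarith [e1.1, e1.2, e2.1, e2.2]

lemma sum_shiftn_eq_wavg (f : (ℤ → Bool) → ℝ) (x : ℤ → Bool) (L : ℕ) :
    (∑ n ∈ Finset.Icc 1 L, f (shiftn n x)) / (L : ℝ) = wavg f x 1 L := by
  unfold wavg
  congr 1
  induction L with
  | zero => simp
  | succ L ih =>
    rw [Finset.sum_Icc_succ_top (by omega), ih, Finset.sum_range_succ]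
    congr 2
    funext m
    simp only [shiftn, tr]
    congr 1
    push_cast
    ring

lemma cnt_div_mem (A : Set ℤ) (L : ℕ) : 0 ≤ cnt A L / L ∧ cnt A L / L ≤ 1 := by
  rw [cnt_eq_wcount]
  refine ⟨by positivity, div_le_one_of_le₀ ?_ (Nat.cast_nonneg _)⟩
  exact_mod_cast wcount_le A 1 L

lemma cnt_bdd_below (A : Set ℤ) : IsBoundedUnder (· ≥ ·) atTop fun L : ℕ => cnt A L / L :=
  isBoundedUnder_of ⟨0, fun L => (cnt_div_mem A L).1⟩

lemma cnt_bdd_above (A : Set ℤ) : IsBoundedUnder (· ≤ ·) atTop fun L : ℕ => cnt A L / L :=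
  isBoundedUnder_of ⟨1, fun L => (cnt_div_mem A L).2⟩

lemma exists_realizes (A : Set ℤ) : ∃ ℓ : ℕ → ℕ, (∀ j, 0 < ℓ j) ∧ RealizesLowerDensity A ℓ := by
  have hfreq : ∀ j : ℕ, ∃ᶠ L : ℕ in atTop,
      |cnt A L / L - lowerDensity A| < 1 / ((j : ℝ) + 1) := by
    intro j
    have hj : 0 < 1 / ((j : ℝ) + 1) := by positivity
    have h1 : ∃ᶠ L : ℕ in atTop, cnt A L / L < lowerDensity A + 1 / ((j : ℝ) + 1) :=
      frequently_lt_of_liminf_lt (cnt_bdd_above A).isCoboundedUnder_ge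
        (show lowerDensity A < _ by linarith)
    have h2 : ∀ᶠ L : ℕ in atTop, lowerDensity A - 1 / ((j : ℝ) + 1) < cnt A L / L :=
      eventually_lt_of_lt_liminf (show _ < lowerDensity A by linarith) (cnt_bdd_below A)
    exact (h1.and_eventually h2).mono fun L hL => abs_lt.2 ⟨by linarith [hL.2], by linarith [hL.1]⟩
  obtain ⟨φ, hφ, hφ2⟩ := extraction_forall_of_frequently hfreq
  have hlim : Tendsto (fun j => φ (j + 1)) atTop atTop :=
    hφ.tendsto_atTop.comp (tendsto_add_atTop_nat 1)
  refine ⟨fun j => φ (j + 1), fun j => (Nat.zero_le _).trans_lt (hφ j.lt_succ_self), hlim, ?_⟩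
  have h0 : Tendsto (fun j : ℕ => cnt A (φ j) / (φ j : ℝ)) atTop (𝓝 (lowerDensity A)) := by
    rw [tendsto_iff_dist_tendsto_zero]
    exact squeeze_zero (fun _ => dist_nonneg) (fun j => (hφ2 j).le)
      tendsto_one_div_add_atTop_nhds_zero_nat
  exact h0.comp (tendsto_add_atTop_nat 1)

/-- The Mirsky measure lives on the `𝓑`-free subshift and is invariant. -/
lemma IsMirsky.mem_InvM {B : Set ℕ} {ν : Measure (ℤ → Bool)} (hν : IsMirsky B ν) :
    ν ∈ InvM (Xeta B) := by
  obtain ⟨ℓ, hpos, hℓ⟩ := exists_realizes (MB B)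
  obtain ⟨μ, hμ, hlim⟩ := exists_invariant (eta B) (fun _ => 1) ℓ hpos hℓ.1
  have hp := hν.1
  have hp' := hμ.1
  have : μ = ν := by
    refine measure_ext fun f => tendsto_nhds_unique (hlim f) ?_
    refine ((hν.2 ℓ hℓ f).mono_left Nat.hyperfilter_le_atTop).congr fun j => ?_
    exact sum_shiftn_eq_wavg f _ _
  exact this ▸ hμ

/-- `M_{𝓑*} ∖ M_𝓑` being small, the two Mirsky measures coincide. -/
lemma mirsky_eq {B : Set ℕ} (hB : 0 ∉ B) (hZ : ∀ ε > 0, USmall (ZB B) ε)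
    {ν νs : Measure (ℤ → Bool)} (hν : IsMirsky B ν) (hνs : IsMirsky (Bstar B) νs) : ν = νs := by
  have hp := hν.1
  have hps := hνs.1
  have hsub : MB B ⊆ MB (Bstar B) := by
    rw [MB_Bstar hB]
    exact MB_mono Set.subset_union_left
  have hcover : MB (Bstar B) ⊆ MB B ∪ ZB B := by
    intro n hn
    by_cases h : n ∈ MB B
    · exact Or.inl h
    · exact Or.inr ⟨h, MB_Bstar hB ▸ hn⟩
  have hle : ∀ L : ℕ, cnt (MB B) L / L ≤ cnt (MB (Bstar B)) L / L := by
    intro L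
    rw [cnt_eq_wcount, cnt_eq_wcount]
    exact div_le_div_of_nonneg_right (by exact_mod_cast wcount_mono hsub 1 L) (Nat.cast_nonneg _)
  have hge : ∀ ε > 0, ∀ᶠ L : ℕ in atTop, cnt (MB (Bstar B)) L / L ≤ cnt (MB B) L / L + ε := by
    intro ε hε
    obtain ⟨N, hN⟩ := hZ ε hε
    filter_upwards [eventually_ge_atTop N, eventually_gt_atTop 0] with L hL hL0
    have hL' : (0 : ℝ) < L := by exact_mod_cast hL0
    rw [cnt_eq_wcount, cnt_eq_wcount, div_le_iff₀ hL', add_mul, div_mul_cancel₀ _ hL'.ne']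
    have h1 : (wcount (MB (Bstar B)) 1 L : ℝ) ≤ wcount (MB B) 1 L + wcount (ZB B) 1 L := by
      exact_mod_cast (wcount_mono hcover 1 L).trans (wcount_union_le _ _ _ _)
    linarith [hN L hL 1]
  have hdiff : Tendsto (fun L : ℕ => cnt (MB (Bstar B)) L / L - cnt (MB B) L / L) atTop (𝓝 0) := by
    rw [Metric.tendsto_nhds]
    intro ε hε
    filter_upwards [hge (ε / 2) (half_pos hε)] with L hL
    rw [Real.dist_eq, sub_zero, abs_of_nonneg (sub_nonneg.2 (hle L))]
    linarith
  have hld : lowerDensity (MB (Bstar B)) = lowerDensity (MB B) := by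
    refine le_antisymm (le_of_forall_pos_le_add fun ε hε => ?_)
      (liminf_le_liminf (Eventually.of_forall hle) (cnt_bdd_below _)
        (cnt_bdd_above _).isCoboundedUnder_ge)
    obtain ⟨ℓ, -, hℓ⟩ := exists_realizes (MB B)
    have h1 := hℓ.2.add (hdiff.comp hℓ.1)
    have h2 : ∃ᶠ L : ℕ in atTop, cnt (MB (Bstar B)) L / L ≤ lowerDensity (MB B) + ε := by
      refine hℓ.1.frequently (Eventually.frequently ?_)
      rw [add_zero] at h1
      filter_upwards [h1.eventually (gt_mem_nhds (lt_add_of_pos_right _ hε))] with j hj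
      simp only [Function.comp] at hj
      linarith
    exact liminf_le_of_frequently_le h2 (cnt_bdd_below _)
  obtain ⟨ℓ, -, hℓ⟩ := exists_realizes (MB B)
  have hℓs : RealizesLowerDensity (MB (Bstar B)) ℓ := by
    refine ⟨hℓ.1, ?_⟩
    have h1 := hℓ.2.add (hdiff.comp hℓ.1)
    rw [add_zero] at h1
    rw [hld]
    refine h1.congr fun j => ?_
    simp only [Function.comp]
    ring
  have hne : {i | eta B i ≠ etaStar B i} ⊆ ZB B := by
    intro i hi
    by_contra hiZ
    refine hi (Bool.eq_iff_iff.2 ?_)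
    rw [eta_eq_true, show etaStar B = eta (Bstar B) from rfl, eta_eq_true]
    refine not_congr ⟨fun h => hsub h, fun h => ?_⟩
    exact (hcover h).resolve_right hiZ
  refine measure_ext fun f => eq_of_forall_dist_le fun ε hε => ?_
  obtain ⟨θ, hθ, hclose⟩ := exists_close f hε
  obtain ⟨N, hN⟩ := hclose (eta B) (etaStar B) ((hZ θ hθ).mono hne le_rfl)
  have h1 := ((hν.2 ℓ hℓ f).sub (hνs.2 ℓ hℓs f)).abs
  rw [Real.dist_eq]
  refine le_of_tendsto h1 ?_
  filter_upwards [hℓ.1.eventually_ge_atTop N] with j hj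
  rw [sum_shiftn_eq_wavg, sum_shiftn_eq_wavg]
  exact hN _ hj 1

/-- for `𝓑` with regular Toeplitz `η*`:
`h(X_η) = 0 ⟺ P(X_η) = {ν_η} ⟺ X_η uniquely ergodic`; moreover in that
case `ν_η = ν_{η*}`. -/
theorem statement6 (B : Set ℕ) (hB : 0 ∉ B)
    (hreg : RegularToeplitz (etaStar B))
    (ν νs : Measure (ℤ → Bool)) (hν : IsMirsky B ν) (hνs : IsMirsky (Bstar B) νs) :
    ((topEnt (Xeta B) = 0 ↔ InvM (Xeta B) = {ν}) ∧
     (topEnt (Xeta B) = 0 ↔ ∃! μ, μ ∈ InvM (Xeta B))) ∧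
    (topEnt (Xeta B) = 0 → ν = νs) := by
  have hent : topEnt (Xeta B) = 0 → ∀ ε > 0, USmall (ZB B) ε :=
    fun h ε hε => USmall_of_topEnt hB hreg h hε
  have hmem := hν.mem_InvM
  have hset : topEnt (Xeta B) = 0 → InvM (Xeta B) = {ν} := fun h =>
    Set.eq_singleton_iff_unique_mem.2
      ⟨hmem, fun μ hμ => unique_of_BAP (BAP_eta hB hreg (hent h)) hμ hmem⟩
  have huniq : InvM (Xeta B) = {ν} → ∃! μ, μ ∈ InvM (Xeta B) := fun h =>
    ⟨ν, hmem, fun μ hμ => by rw [h] at hμ; exact hμ⟩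
  have hback : (∃! μ, μ ∈ InvM (Xeta B)) → topEnt (Xeta B) = 0 := fun h =>
    topEnt_of_BAP (BAP_eta hB hreg fun ε hε => USmall_of_unique hB hreg h hε)
  exact ⟨⟨⟨hset, fun h => hback (huniq h)⟩, ⟨fun h => huniq (hset h), hback⟩⟩,
    fun h => mirsky_eq hB (hent h) hν hνs⟩

end BFree
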